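/- arXiv:2506.04187 — 2 statements merged into one kernel-verified Lean document; each statement's English description precedes it below -/
import Mathlib

section
/- Let γ=(γ_q)_{q≥1} be a sequence of real numbers and let ψ:ℕ→ℝ≥0 be decreasing. If there exist ε>0 and an integer k≥2 such that ∑_{q=1}^∞ ψ(q) / ( √(log q) · (log log q) · (log log log q) ⋯ (log^{(k)} q)^{1+ε} ) = ∞, where log^{(j)} denotes the j-fold iterate of log and only the innermost (k-fold iterated) logarithm carries the exponent 1+ε, then meas(W(ψ,γ)) = 1. -/
open MeasureTheory Filter

/-- Distance from a real number to the nearest integer. -/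
noncomputable def distNearestInt (x : ℝ) : ℝ := |x - round x|

/-- `log x = max {1, ln x}`. -/
noncomputable def log1 (x : ℝ) : ℝ := max 1 (Real.log x)

/-- `j`-fold iterate of `log1`. -/
noncomputable def iterlog : ℕ → ℝ → ℝ
  | 0, x => x
  | (j+1), x => log1 (iterlog j x)

/-- The set of `α ∈ [0,1]` with `‖qα - γ_q‖ < ψ q` for infinitely many `q ≥ 1`. -/
def WSet (ψ : ℕ → ℝ) (γ : ℕ → ℝ) : Set ℝ :=
  {α | α ∈ Set.Icc (0:ℝ) 1 ∧
    {q : ℕ | 1 ≤ q ∧ distNearestInt (q * α - γ q) < ψ q}.Infinite}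


/-- indicator -/
noncomputable def ind (g ρ x : ℝ) : ℝ := if distNearestInt (x - g) < ρ then 1 else 0

lemma ind_nonneg (g ρ x : ℝ) : 0 ≤ ind g ρ x := by unfold ind; split_ifs <;> norm_num
lemma ind_le_one (g ρ x : ℝ) : ind g ρ x ≤ 1 := by unfold ind; split_ifs <;> norm_num

lemma dni_add_int (x : ℝ) (n : ℤ) : distNearestInt (x + n) = distNearestInt x := by
  unfold distNearestInt; rw [round_add_intCast]; push_cast; congr 1; ring

lemma ind_add_int (g ρ x : ℝ) (n : ℤ) : ind g ρ (x + n) = ind g ρ x := by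
  unfold ind
  rw [show x + n - g = (x - g) + n by ring, dni_add_int]

lemma measurable_dni : Measurable distNearestInt := by
  unfold distNearestInt
  have : (fun x : ℝ => |x - round x|) = fun x : ℝ => |x - (⌊x + 1/2⌋ : ℤ)| := by
    funext x; rw [round_eq]
  rw [this]
  have h : Measurable (fun x : ℝ => ((⌊x + 1/2⌋ : ℤ) : ℝ)) :=
    (measurable_from_top (f := fun n : ℤ => (n : ℝ))).comp
      (Int.measurable_floor.comp (measurable_id.add_const _))
  exact (measurable_id.sub h).abs

lemma measurable_ind (g ρ : ℝ) : Measurable (ind g ρ) := by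
  unfold ind
  refine Measurable.ite ?_ measurable_const measurable_const
  exact measurableSet_lt (measurable_dni.comp (measurable_id.sub_const g)) measurable_const

lemma intvl_of_bdd {f : ℝ → ℝ} (hf : Measurable f) (C : ℝ) (h0 : ∀ x, 0 ≤ f x) (h1 : ∀ x, f x ≤ C)
    (a b : ℝ) : IntervalIntegrable f volume a b := by
  refine (intervalIntegrable_const (c := C)).mono_fun hf.aestronglyMeasurable ?_
  refine Filter.Eventually.of_forall fun x => ?_
  show ‖f x‖ ≤ ‖C‖
  rw [Real.norm_of_nonneg (h0 x), Real.norm_of_nonneg ((h0 x).trans (h1 x))]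
  exact h1 x

lemma integral_scale {H : ℝ → ℝ} (hp : Function.Periodic H 1)
    (hi : ∀ a b, IntervalIntegrable H volume a b) (d : ℕ) (hd : 1 ≤ d) :
    ∫ x in (0:ℝ)..1, H (d * x) = ∫ x in (0:ℝ)..1, H x := by
  have hd0 : (d : ℝ) ≠ 0 := by positivity
  rw [intervalIntegral.integral_comp_mul_left _ hd0]
  have := hp.intervalIntegral_add_zsmul_eq (d : ℤ) 0 hi
  simp at this
  simp only [mul_zero, mul_one, smul_eq_mul]
  rw [this]; field_simp

lemma integral_shift {H : ℝ → ℝ} (hp : Function.Periodic H 1) (c : ℝ) :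
    ∫ x in (0:ℝ)..1, H (x + c) = ∫ x in (0:ℝ)..1, H x := by
  rw [intervalIntegral.integral_comp_add_right]
  have := hp.intervalIntegral_add_eq c 0
  simpa [add_comm] using this

lemma ind_periodic (g ρ : ℝ) : Function.Periodic (ind g ρ) 1 := fun x => by
  simpa using ind_add_int g ρ x 1

lemma integral_ind (g ρ : ℝ) (h0 : 0 ≤ ρ) (h1 : ρ ≤ 1/4) :
    ∫ x in (0:ℝ)..1, ind g ρ x = 2 * ρ := by
  rw [← integral_shift (ind_periodic g ρ) (g - 1/2), intervalIntegral.integral_comp_add_right]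
  have hi := intvl_of_bdd (measurable_ind g ρ) 1 (ind_nonneg g ρ) (ind_le_one g ρ)
  rw [show 0 + (g - 1/2) = g - 1/2 by ring, show 1 + (g - 1/2) = g + 1/2 by ring]
  have key : ∀ x, x ∈ Set.Ioo (g - 1/2) (g + 1/2) → ind g ρ x = if |x - g| < ρ then 1 else 0 := by
    intro x hx
    unfold ind distNearestInt
    have : round (x - g) = 0 := by
      rw [round_eq, Int.floor_eq_iff]; constructor <;> push_cast <;> linarith [hx.1, hx.2]
    rw [this]; simp
  rw [← intervalIntegral.integral_add_adjacent_intervals (hi _ (g - ρ)) (hi _ _),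
    ← intervalIntegral.integral_add_adjacent_intervals (hi (g-ρ) (g + ρ)) (hi _ _)]
  have e1 : ∫ x in (g - 1/2)..(g - ρ), ind g ρ x = ∫ x in (g - 1/2)..(g - ρ), (0:ℝ) := by
    refine intervalIntegral.integral_congr_Ioo_of_le (by linarith) fun x hx => ?_
    rw [key x ⟨hx.1, by linarith [hx.2]⟩, if_neg]
    rw [not_lt, le_abs]; right; linarith [hx.2]
  have e2 : ∫ x in (g + ρ)..(g + 1/2), ind g ρ x = ∫ x in (g + ρ)..(g + 1/2), (0:ℝ) := by
    refine intervalIntegral.integral_congr_Ioo_of_le (by linarith) fun x hx => ?_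
    rw [key x ⟨by linarith [hx.1], hx.2⟩, if_neg]
    rw [not_lt, le_abs]; left; linarith [hx.1]
  have e3 : ∫ x in (g - ρ)..(g + ρ), ind g ρ x = ∫ x in (g - ρ)..(g + ρ), (1:ℝ) := by
    refine intervalIntegral.integral_congr_Ioo_of_le (by linarith) fun x hx => ?_
    rw [key x ⟨by linarith [hx.1], by linarith [hx.2]⟩, if_pos]
    rw [abs_lt]; constructor <;> linarith [hx.1, hx.2]
  rw [e1, e2, e3]; simp; ring

/-- number of `k < r` with `‖t + qk/r‖ < ρ`. -/
lemma count_bound (g ρ t : ℝ) (h0 : 0 ≤ ρ) (q r : ℕ) (hr : 1 ≤ r) (hc : Nat.Coprime q r) :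
    ∑ k ∈ Finset.range r, ind g ρ (t + q * k / r) ≤ 2 * ρ * r + 1 := by
  have hr0 : (0:ℝ) < r := by exact_mod_cast hr
  classical
  unfold ind
  rw [Finset.sum_ite, Finset.sum_const_zero, add_zero, Finset.sum_const, nsmul_eq_mul, mul_one]
  set s := Finset.filter (fun k : ℕ => distNearestInt (t + q * k / r - g) < ρ) (Finset.range r)
  let f : ℕ → ℤ := fun k => q * k - r * round (t + q * k / r - g)
  set a : ℝ := (g - t) * r - ρ * r
  set b : ℝ := (g - t) * r + ρ * r
  have hmap : ∀ k ∈ s, f k ∈ Finset.Ioo ⌊a⌋ ⌈b⌉ := by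
    intro k hk
    have hk2 := (Finset.mem_filter.mp hk).2
    unfold distNearestInt at hk2
    rw [abs_lt] at hk2
    have hf : ((f k : ℤ) : ℝ) = q * k - r * round (t + q * k / r - g) := by simp [f]
    have e : (t + q * k / r - g - round (t + q * k / r - g)) * r = t * r - g * r + f k := by
      rw [hf]; field_simp; ring
    have h1 := mul_lt_mul_of_pos_right hk2.1 hr0
    have h2 := mul_lt_mul_of_pos_right hk2.2 hr0
    rw [e] at h1 h2
    rw [Finset.mem_Ioo, Int.floor_lt, Int.lt_ceil]
    constructor <;> simp only [a, b] <;> linarith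
  have hinj : Set.InjOn f s := by
    intro k hk k' hk' hkk
    have h1 := Finset.mem_range.mp (Finset.mem_filter.mp hk).1
    have h2 := Finset.mem_range.mp (Finset.mem_filter.mp hk').1
    have hd : (r : ℤ) ∣ q * (k' - k) := by
      refine ⟨round (t + q * k' / r - g) - round (t + q * k / r - g), ?_⟩
      simp only [f] at hkk
      linarith
    have hd2 : (r : ℤ) ∣ (k' - k : ℤ) :=
      IsCoprime.dvd_of_dvd_mul_left (Nat.isCoprime_iff_coprime.mpr hc.symm) hd
    have := Nat.modEq_iff_dvd.mpr hd2
    rwa [Nat.ModEq, Nat.mod_eq_of_lt h1, Nat.mod_eq_of_lt h2] at this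
  have hcard := Finset.card_le_card_of_injOn f hmap hinj
  rw [Int.card_Ioo] at hcard
  have h1 := Int.sub_one_lt_floor a
  have h2 := Int.ceil_lt_add_one b
  have h3 : (s.card : ℝ) ≤ max ((⌈b⌉ - ⌊a⌋ - 1 : ℤ) : ℝ) 0 := by
    have : (s.card : ℤ) ≤ max (⌈b⌉ - ⌊a⌋ - 1) 0 := by
      rw [← Int.toNat_eq_max]; exact_mod_cast hcard
    exact_mod_cast this
  refine h3.trans (max_le ?_ (by positivity))
  push_cast
  have : b - a = 2 * ρ * r := by simp only [a, b]; ring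
  linarith

lemma ind_mul_periodic (g ρ : ℝ) (q : ℕ) : Function.Periodic (fun x => ind g ρ (q * x)) 1 := by
  intro x
  have := ind_add_int g ρ (q * x) q
  simp only [mul_add, mul_one]
  exact_mod_cast this

lemma measurable_ind_mul (g ρ : ℝ) (q : ℕ) : Measurable (fun x => ind g ρ (q * x)) :=
  (measurable_ind g ρ).comp (measurable_const_mul _)

lemma integral_ind_mul (g ρ : ℝ) (h0 : 0 ≤ ρ) (h1 : ρ ≤ 1/4) (q : ℕ) (hq : 1 ≤ q) :
    ∫ x in (0:ℝ)..1, ind g ρ (q * x) = 2 * ρ := by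
  rw [integral_scale (ind_periodic g ρ)
    (intvl_of_bdd (measurable_ind g ρ) 1 (ind_nonneg g ρ) (ind_le_one g ρ)) q hq,
    integral_ind g ρ h0 h1]

lemma overlap_coprime (g g' ρ ρ' : ℝ) (h0 : 0 ≤ ρ) (h0' : 0 ≤ ρ') (h1' : ρ' ≤ 1/4)
    (q r : ℕ) (hr : 1 ≤ r) (hc : Nat.Coprime q r) :
    ∫ x in (0:ℝ)..1, ind g ρ (q * x) * ind g' ρ' (r * x) ≤ 4 * ρ * ρ' + 2 * ρ' / r := by
  have hr0 : (0:ℝ) < r := by exact_mod_cast hr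
  set H : ℝ → ℝ := fun x => ind g ρ (q * x) * ind g' ρ' (r * x) with hH
  have hHm : Measurable H := (measurable_ind_mul g ρ q).mul (measurable_ind_mul g' ρ' r)
  have hH0 : ∀ x, 0 ≤ H x := fun x => mul_nonneg (ind_nonneg _ _ _) (ind_nonneg _ _ _)
  have hH1 : ∀ x, H x ≤ 1 := fun x =>
    mul_le_one₀ (ind_le_one _ _ _) (ind_nonneg _ _ _) (ind_le_one _ _ _)
  have hp : Function.Periodic H 1 := (ind_mul_periodic g ρ q).mul (ind_mul_periodic g' ρ' r)
  have hsum : (r : ℝ) * ∫ x in (0:ℝ)..1, H x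
      = ∫ x in (0:ℝ)..1, ∑ k ∈ Finset.range r, H (x + k / r) := by
    rw [intervalIntegral.integral_finsetSum]
    · simp_rw [integral_shift hp]; simp
    · intro k _
      exact intvl_of_bdd (hHm.comp (measurable_add_const _)) 1 (fun x => hH0 _) (fun x => hH1 _) _ _
  have hle : ∫ x in (0:ℝ)..1, ∑ k ∈ Finset.range r, H (x + k / r)
      ≤ ∫ x in (0:ℝ)..1, (2 * ρ * r + 1) * ind g' ρ' (r * x) := by
    refine intervalIntegral.integral_mono_on zero_le_one ?_ ?_ ?_
    · refine intvl_of_bdd (Finset.measurable_sum _ fun k _ => hHm.comp (measurable_add_const _)) r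
        (fun x => Finset.sum_nonneg fun k _ => hH0 _) (fun x => ?_) _ _
      calc _ ≤ ∑ k ∈ Finset.range r, (1:ℝ) := Finset.sum_le_sum fun k _ => hH1 _
        _ = r := by simp
    · exact (intvl_of_bdd (measurable_ind_mul g' ρ' r) 1 (fun x => ind_nonneg _ _ _)
        (fun x => ind_le_one _ _ _) _ _).const_mul _
    · intro x _
      have : ∀ k ∈ Finset.range r, H (x + k / r) = ind g ρ (q * x + q * k / r) * ind g' ρ' (r * x) := by
        intro k _
        simp only [hH]
        congr 1
        · congr 1; ring
        · rw [← ind_add_int g' ρ' (r * x) k]; congr 1; field_simp; push_cast; ring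
      rw [Finset.sum_congr rfl this, ← Finset.sum_mul]
      exact mul_le_mul_of_nonneg_right (count_bound g ρ _ h0 q r hr hc) (ind_nonneg _ _ _)
  rw [intervalIntegral.integral_const_mul, integral_ind_mul g' ρ' h0' h1' r hr, ← hsum] at hle
  have : 4 * ρ * ρ' + 2 * ρ' / r = ((2 * ρ * r + 1) * (2 * ρ')) / r := by field_simp; ring
  rw [this, le_div_iff₀ hr0, mul_comm]; exact hle

lemma overlap (g g' ρ ρ' : ℝ) (h0 : 0 ≤ ρ) (h0' : 0 ≤ ρ') (h1' : ρ' ≤ 1/4)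
    (q r : ℕ) (hr : 1 ≤ r) :
    ∫ x in (0:ℝ)..1, ind g ρ (q * x) * ind g' ρ' (r * x)
      ≤ 4 * ρ * ρ' + 2 * ρ' * Nat.gcd q r / r := by
  obtain ⟨q', r', hc, hq', hr'⟩ := Nat.exists_coprime q r
  set d := Nat.gcd q r
  have hd : 1 ≤ d := Nat.gcd_pos_of_pos_right _ hr
  have hr1 : 1 ≤ r' := by
    rcases Nat.eq_zero_or_pos r' with h | h
    · simp [h] at hr'; omega
    · exact h
  have hd0 : (0:ℝ) < d := by exact_mod_cast hd
  have hr10 : (0:ℝ) < r' := by exact_mod_cast hr1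
  have h := overlap_coprime g g' ρ ρ' h0 h0' h1' q' r' hr1 hc
  rw [← integral_scale (H := fun x => ind g ρ (q' * x) * ind g' ρ' (r' * x)) ((ind_mul_periodic g ρ q').mul (ind_mul_periodic g' ρ' r'))
    (intvl_of_bdd ((measurable_ind_mul g ρ q').mul (measurable_ind_mul g' ρ' r')) 1
      (fun x => mul_nonneg (ind_nonneg _ _ _) (ind_nonneg _ _ _))
      (fun x => mul_le_one₀ (ind_le_one _ _ _) (ind_nonneg _ _ _) (ind_le_one _ _ _))) d hd] at h
  have e : 2 * ρ' * d / r = 2 * ρ' / r' := by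
    rw [hr']; push_cast; field_simp
  rw [e]
  have e2 : ∀ x : ℝ, ind g ρ (q * x) * ind g' ρ' (r * x)
      = ind g ρ (q' * (d * x)) * ind g' ρ' (r' * (d * x)) := by
    intro x
    have e3 : (q : ℝ) = q' * d := by exact_mod_cast hq'
    have e4 : (r : ℝ) = r' * d := by exact_mod_cast hr'
    rw [e3, e4, mul_assoc, mul_assoc]
  simp_rw [e2]
  exact h

lemma intvl_sum {ι : Type*} (s : Finset ι) {f : ι → ℝ → ℝ}
    (h : ∀ i ∈ s, IntervalIntegrable (f i) volume 0 1) :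
    IntervalIntegrable (fun x => ∑ i ∈ s, f i x) volume 0 1 := by
  have h2 := IntervalIntegrable.sum s h
  have e : (∑ i ∈ s, f i) = fun x => ∑ i ∈ s, f i x := by funext x; simp
  rw [e] at h2; exact h2

lemma second_moment (s : Finset ℕ) (hs : ∀ q ∈ s, 1 ≤ q) (w ρ γ : ℕ → ℝ) (hw : ∀ q, 0 ≤ w q)
    (hρ0 : ∀ q, 0 ≤ ρ q) (hρ1 : ∀ q, ρ q ≤ 1/4) (K M : ℝ) (hM : M = ∑ q ∈ s, w q * (2 * ρ q))
    (hMpos : 0 < M)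
    (hE : ∑ q ∈ s, ∑ r ∈ s, (if q ≤ r then w q * w r * (2 * ρ r * Nat.gcd q r / r) else 0) ≤ K * M) :
    volume {x : ℝ | x ∈ Set.Icc (0:ℝ) 1 ∧ ∀ q ∈ s, ρ q ≤ distNearestInt (q * x - γ q)}
      ≤ ENNReal.ofReal (2 * K / M) := by
  set F : ℕ → ℝ → ℝ := fun q x => ind (γ q) (ρ q) (q * x) with hF
  have hFm : ∀ q, Measurable (F q) := fun q => measurable_ind_mul _ _ _
  have hF0 : ∀ q x, 0 ≤ F q x := fun q x => ind_nonneg _ _ _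
  have hF1 : ∀ q x, F q x ≤ 1 := fun q x => ind_le_one _ _ _
  have hFi : ∀ q, IntervalIntegrable (F q) volume 0 1 := fun q =>
    intvl_of_bdd (hFm q) 1 (hF0 q) (hF1 q) _ _
  have hFFi : ∀ q r, IntervalIntegrable (fun x => F q x * F r x) volume 0 1 := fun q r =>
    intvl_of_bdd ((hFm q).mul (hFm r)) 1 (fun x => mul_nonneg (hF0 q x) (hF0 r x))
      (fun x => mul_le_one₀ (hF1 q x) (hF0 r x) (hF1 r x)) _ _
  set N : ℝ → ℝ := fun x => ∑ q ∈ s, w q * F q x with hN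
  have hNm : Measurable N := Finset.measurable_sum _ fun q _ => (hFm q).const_mul _
  have hN1 : ∫ x in (0:ℝ)..1, N x = M := by
    rw [hN, intervalIntegral.integral_finsetSum (fun q _ => (hFi q).const_mul _), hM]
    refine Finset.sum_congr rfl fun q hq => ?_
    rw [intervalIntegral.integral_const_mul, integral_ind_mul _ _ (hρ0 q) (hρ1 q) q (hs q hq)]
  have hNi : IntervalIntegrable N volume 0 1 := intvl_sum s fun q _ => (hFi q).const_mul _
  have hNN : ∀ x, N x ^ 2 = ∑ q ∈ s, ∑ r ∈ s, w q * w r * (F q x * F r x) := by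
    intro x
    rw [hN, sq, Finset.sum_mul_sum]
    refine Finset.sum_congr rfl fun q _ => Finset.sum_congr rfl fun r _ => by ring
  have hN2i : IntervalIntegrable (fun x => N x ^ 2) volume 0 1 := by
    simp_rw [hNN]
    exact intvl_sum s fun q _ => intvl_sum s fun r _ => (hFFi q r).const_mul _
  set e : ℕ → ℕ → ℝ := fun q r => if q ≤ r then w q * w r * (2 * ρ r * Nat.gcd q r / r) else 0 with he
  have he0 : ∀ q r, 0 ≤ e q r := by
    intro q r
    simp only [he]; split_ifs
    · have := hw q; have := hw r; have := hρ0 r; positivity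
    · exact le_rfl
  have hN2 : ∫ x in (0:ℝ)..1, N x ^ 2 ≤ M ^ 2 + 2 * K * M := by
    simp_rw [hNN]
    rw [intervalIntegral.integral_finsetSum
      (fun q _ => intvl_sum s fun r _ => (hFFi q r).const_mul _)]
    have h1 : ∀ q ∈ s, ∫ x in (0:ℝ)..1, ∑ r ∈ s, w q * w r * (F q x * F r x)
        ≤ ∑ r ∈ s, (w q * (2 * ρ q) * (w r * (2 * ρ r)) + (e q r + e r q)) := by
      intro q hq
      rw [intervalIntegral.integral_finsetSum (fun r _ => (hFFi q r).const_mul _)]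
      refine Finset.sum_le_sum fun r hr => ?_
      rw [intervalIntegral.integral_const_mul]
      have hww : 0 ≤ w q * w r := mul_nonneg (hw q) (hw r)
      rcases le_total q r with hqr | hqr
      · have h2 := overlap (γ q) (γ r) (ρ q) (ρ r) (hρ0 q) (hρ0 r) (hρ1 r) q r (hs r hr)
        have h3 := mul_le_mul_of_nonneg_left h2 hww
        have h4 : e q r = w q * w r * (2 * ρ r * Nat.gcd q r / r) := by simp [he, hqr]
        have h5 := he0 r q
        simp only [hF]
        linarith
      · have h2 := overlap (γ r) (γ q) (ρ r) (ρ q) (hρ0 r) (hρ0 q) (hρ1 q) r q (hs q hq)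
        have h3 := mul_le_mul_of_nonneg_left h2 hww
        have h4 : e r q = w r * w q * (2 * ρ q * Nat.gcd r q / q) := by simp [he, hqr]
        have h5 := he0 q r
        have h6 : ∀ x, F q x * F r x = ind (γ r) (ρ r) (r * x) * ind (γ q) (ρ q) (q * x) :=
          fun x => mul_comm _ _
        simp_rw [h6]
        linarith
    refine (Finset.sum_le_sum h1).trans ?_
    simp_rw [Finset.sum_add_distrib]
    rw [← Finset.sum_mul_sum, ← hM, Finset.sum_comm (f := fun q r => e r q)]
    linarith
  have hvar : ∫ x in (0:ℝ)..1, (N x - M) ^ 2 ≤ 2 * K * M := by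
    have : ∀ x, (N x - M) ^ 2 = N x ^ 2 - (2 * M) * N x + M ^ 2 := fun x => by ring
    simp_rw [this]
    rw [intervalIntegral.integral_add (hN2i.sub (hNi.const_mul _)) intervalIntegrable_const,
      intervalIntegral.integral_sub hN2i (hNi.const_mul _), intervalIntegral.integral_const_mul, hN1]
    simp
    linarith
  have hvi : IntervalIntegrable (fun x => (N x - M) ^ 2) volume 0 1 := by
    have : (fun x => (N x - M) ^ 2) = fun x => (N x ^ 2 - (2 * M) * N x) + M ^ 2 := by
      funext x; ring
    rw [this]
    exact (hN2i.sub (hNi.const_mul _)).add intervalIntegrable_const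
  rw [intervalIntegral.integral_of_le zero_le_one, ← integral_Icc_eq_integral_Ioc] at hvar
  have hvi2 : IntegrableOn (fun x => (N x - M) ^ 2) (Set.Icc 0 1) volume := by
    rw [intervalIntegrable_iff_integrableOn_Icc_of_le zero_le_one] at hvi; exact hvi
  have hmk := mul_meas_ge_le_integral_of_nonneg (μ := volume.restrict (Set.Icc (0:ℝ) 1))
    (f := fun x => (N x - M) ^ 2) (Filter.Eventually.of_forall fun x => sq_nonneg _) hvi2 (M ^ 2)
  have hsub : {x : ℝ | x ∈ Set.Icc (0:ℝ) 1 ∧ ∀ q ∈ s, ρ q ≤ distNearestInt (q * x - γ q)}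
      ⊆ {x | M ^ 2 ≤ (N x - M) ^ 2} ∩ Set.Icc 0 1 := by
    rintro x ⟨hx, hq⟩
    refine ⟨?_, hx⟩
    have : N x = 0 := Finset.sum_eq_zero fun q hq' => by
      simp only [hF, ind]; rw [if_neg (not_lt.mpr (hq q hq')), mul_zero]
    simp [this]
  have hms : MeasurableSet {x | M ^ 2 ≤ (N x - M) ^ 2} :=
    measurableSet_le measurable_const ((hNm.sub_const _).pow_const 2)
  refine (measure_mono hsub).trans ?_
  rw [← Measure.restrict_apply hms]
  set V := (volume.restrict (Set.Icc (0:ℝ) 1)) {x | M ^ 2 ≤ (N x - M) ^ 2}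
  have hV : V ≠ ⊤ := measure_ne_top _ _
  rw [ENNReal.le_ofReal_iff_toReal_le hV]
  · rw [le_div_iff₀ hMpos]
    have h := hmk.trans hvar
    have h2 : M * (V.toReal * M) ≤ M * (2 * K) := by
      have : (volume.restrict (Set.Icc (0:ℝ) 1)).real {x | M ^ 2 ≤ (N x - M) ^ 2} = V.toReal := rfl
      rw [this] at h
      nlinarith
    exact le_of_mul_le_mul_left h2 hMpos
  · have : 0 ≤ K * M := le_trans (Finset.sum_nonneg fun q _ => Finset.sum_nonneg fun r _ => he0 q r) hE
    have hK : 0 ≤ K := nonneg_of_mul_nonneg_left this hMpos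
    positivity

/-- number of divisors -/
noncomputable def tau (q : ℕ) : ℝ := (q.divisors.card : ℝ)

lemma tau_pos {q : ℕ} (hq : 1 ≤ q) : 0 < tau q := by
  unfold tau
  exact_mod_cast Finset.card_pos.mpr ⟨1, Nat.one_mem_divisors.mpr (by omega)⟩

lemma gcd_sum (q X : ℕ) (hq : 1 ≤ q) :
    ∑ r ∈ Finset.Ioc 0 X, (Nat.gcd q r : ℝ) ≤ tau q * X := by
  have h1 : ∀ r ∈ Finset.Ioc 0 X, (Nat.gcd q r : ℝ) ≤ ∑ d ∈ q.divisors, if d ∣ r then (d:ℝ) else 0 := by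
    intro r _
    have := Finset.single_le_sum (f := fun d => if d ∣ r then (d:ℝ) else 0) (s := q.divisors)
      (fun d _ => by positivity) (Nat.mem_divisors.mpr ⟨Nat.gcd_dvd_left q r, by omega⟩)
    simpa [Nat.gcd_dvd_right] using this
  refine (Finset.sum_le_sum h1).trans ?_
  rw [Finset.sum_comm]
  have h2 : ∀ d ∈ q.divisors, ∑ r ∈ Finset.Ioc 0 X, (if d ∣ r then (d:ℝ) else 0) ≤ X := by
    intro d _
    rw [← Finset.sum_filter, Finset.sum_const, Nat.Ioc_filter_dvd_card_eq_div, nsmul_eq_mul]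
    exact_mod_cast Nat.div_mul_le_self X d
  refine (Finset.sum_le_sum h2).trans ?_
  rw [Finset.sum_const, nsmul_eq_mul]; rfl

lemma block_sum (f : ℕ → ℝ) (a b : ℕ) (hab : a ≤ b) :
    ∑ q ∈ Finset.Ico (16 ^ a) (16 ^ b), f q
      = ∑ n ∈ Finset.Ico a b, ∑ q ∈ Finset.Ico (16 ^ n) (16 ^ (n+1)), f q := by
  induction b, hab using Nat.le_induction with
  | base => simp
  | succ b hab ih =>
    rw [Finset.sum_Ico_succ_top hab, ← ih, Finset.sum_Ico_consecutive]
    · exact Nat.pow_le_pow_right (by norm_num) hab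
    · exact Nat.pow_le_pow_right (by norm_num) (Nat.le_succ b)

lemma geom16 (a n : ℕ) (h : a ≤ n) : ∑ i ∈ Finset.Ico a (n+1), (16:ℝ) ^ i ≤ 2 * 16 ^ n := by
  induction n, h using Nat.le_induction with
  | base => simp
  | succ n hn ih =>
    rw [Finset.sum_Ico_succ_top (by omega)]
    have : (0:ℝ) < 16 ^ n := by positivity
    rw [pow_succ]; linarith

lemma var_bound (a b : ℕ) (hab : a ≤ b) (w : ℕ → ℝ) (R : ℕ → ℝ) (δ : ℝ) (hδ : 0 ≤ δ)
    (hw : ∀ q, 0 ≤ w q) (hwt : ∀ q, 1 ≤ q → w q * tau q ≤ 1) (hR : ∀ n, 0 ≤ R n)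
    (hb : ∀ n ∈ Finset.Ico a b, ∑ q ∈ Finset.Ico (16 ^ n) (16 ^ (n+1)), w q = δ * 16 ^ n) :
    ∑ q ∈ Finset.Ico (16 ^ a) (16 ^ b), ∑ r ∈ Finset.Ico (16 ^ a) (16 ^ b),
      (if q ≤ r then w q * w r * (2 * R (Nat.log 16 r) * Nat.gcd q r / r) else 0)
      ≤ 48 * ∑ q ∈ Finset.Ico (16 ^ a) (16 ^ b), w q * (2 * R (Nat.log 16 q)) := by
  have hlog : ∀ n r, r ∈ Finset.Ico (16 ^ n) (16 ^ (n+1)) → Nat.log 16 r = n := by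
    intro n r hr
    rw [Finset.mem_Ico] at hr
    exact Nat.log_eq_of_pow_le_of_lt_pow hr.1 hr.2
  rw [Finset.sum_comm, block_sum _ a b hab, block_sum _ a b hab, Finset.mul_sum]
  refine Finset.sum_le_sum fun n hn => ?_
  have hn' := Finset.mem_Ico.mp hn
  have hRHS : ∑ q ∈ Finset.Ico (16 ^ n) (16 ^ (n+1)), w q * (2 * R (Nat.log 16 q))
      = δ * 16 ^ n * (2 * R n) := by
    rw [← hb n hn, Finset.sum_mul]
    exact Finset.sum_congr rfl fun q hq => by rw [hlog n q hq]
  rw [hRHS]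
  set B := Finset.Ico (16 ^ n) (16 ^ (n+1)) with hB
  set T := Finset.Ico (16 ^ a) (16 ^ (n+1)) with hT
  have hpos1 : ∀ m q : ℕ, 16 ^ m ≤ q → 1 ≤ q := fun m q h => le_trans (Nat.one_le_pow _ _ (by norm_num)) h
  have hB1 : ∀ r ∈ B, 1 ≤ r := fun r hr => hpos1 n r (Finset.mem_Ico.mp hr).1
  have hT1 : ∀ r ∈ T, 1 ≤ r := fun r hr => hpos1 a r (Finset.mem_Ico.mp hr).1
  have hp : (0:ℝ) < 16 ^ n := by positivity
  have step1 : ∀ r ∈ B, ∑ q ∈ Finset.Ico (16 ^ a) (16 ^ b),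
      (if q ≤ r then w q * w r * (2 * R (Nat.log 16 r) * Nat.gcd q r / r) else 0)
      ≤ ∑ q ∈ T, (2 * R n / 16 ^ n) * ((w r / tau r) * Nat.gcd r q + (w q / tau q) * Nat.gcd q r) := by
    intro r hr
    have hr2 := Finset.mem_Ico.mp hr
    rw [hlog n r hr, ← Finset.sum_filter]
    have hterm : ∀ q ∈ T, 0 ≤ (2 * R n / 16 ^ n) * ((w r / tau r) * Nat.gcd r q + (w q / tau q) * Nat.gcd q r) := by
      intro q hq
      have := hR n; have := hw r; have := hw q; have := tau_pos (hB1 r hr); have := tau_pos (hT1 q hq)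
      positivity
    have hsub : Finset.filter (fun q => q ≤ r) (Finset.Ico (16 ^ a) (16 ^ b)) ⊆ T := by
      intro q hq
      rw [Finset.mem_filter, Finset.mem_Ico] at hq
      rw [hT, Finset.mem_Ico]
      exact ⟨hq.1.1, lt_of_le_of_lt hq.2 hr2.2⟩
    refine le_trans (Finset.sum_le_sum fun q hq => ?_)
      (Finset.sum_le_sum_of_subset_of_nonneg hsub fun q hq _ => hterm q hq)
    have hqT := hsub hq
    have tq := tau_pos (hT1 q hqT)
    have tr := tau_pos (hB1 r hr)
    have hww : w q * w r ≤ w r / tau r + w q / tau q := by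
      have h1 := hwt q (hT1 q hqT)
      have h2 := hwt r (hB1 r hr)
      have hq0 := hw q
      have hr0 := hw r
      rw [← le_div_iff₀ tq] at h1
      rw [← le_div_iff₀ tr] at h2
      rcases le_total (tau q) (tau r) with h | h
      · have h3 : w r ≤ 1 / tau q := h2.trans (one_div_le_one_div_of_le tq h)
        have h4 : w q * w r ≤ w q * (1 / tau q) := mul_le_mul_of_nonneg_left h3 hq0
        have h5 : 0 ≤ w r / tau r := by positivity
        rw [mul_one_div] at h4; linarith
      · have h3 : w q ≤ 1 / tau r := h1.trans (one_div_le_one_div_of_le tr h)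
        have h4 : w r * w q ≤ w r * (1 / tau r) := mul_le_mul_of_nonneg_left h3 hr0
        have h5 : 0 ≤ w q / tau q := by positivity
        rw [mul_one_div] at h4; linarith
    have hr16 : (16:ℝ) ^ n ≤ r := by exact_mod_cast hr2.1
    have hg : 2 * R n * Nat.gcd q r / r ≤ 2 * R n * Nat.gcd q r / 16 ^ n := by
      have := hR n
      gcongr
    calc w q * w r * (2 * R n * Nat.gcd q r / r)
        ≤ (w r / tau r + w q / tau q) * (2 * R n * Nat.gcd q r / 16 ^ n) := by
          refine mul_le_mul hww hg ?_ ?_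
          · have := hR n; positivity
          · have := hw r; have := hw q; positivity
      _ = _ := by rw [Nat.gcd_comm r q]; ring
  refine (Finset.sum_le_sum step1).trans ?_
  simp_rw [← Finset.mul_sum, Finset.sum_add_distrib]
  have hX : ∀ q, 1 ≤ q → ∀ S : Finset ℕ, S ⊆ Finset.Ioc 0 (16 ^ (n+1)) →
      (w q / tau q) * ∑ r ∈ S, (Nat.gcd q r : ℝ) ≤ w q * 16 ^ (n+1) := by
    intro q hq S hS
    have h1 := (Finset.sum_le_sum_of_subset_of_nonneg hS
      (f := fun r => (Nat.gcd q r : ℝ)) fun _ _ _ => by positivity).trans (gcd_sum q _ hq)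
    have tq := tau_pos hq
    have := hw q
    calc _ ≤ (w q / tau q) * (tau q * (16 ^ (n+1) : ℕ)) := by gcongr
      _ = _ := by push_cast; field_simp
  have hTs : T ⊆ Finset.Ioc 0 (16 ^ (n+1)) := by
    intro q hq
    have := hT1 q hq
    have h2 := (Finset.mem_Ico.mp hq).2
    rw [Finset.mem_Ioc]; omega
  have hBs : B ⊆ Finset.Ioc 0 (16 ^ (n+1)) := by
    intro q hq
    have := hB1 q hq
    have h2 := (Finset.mem_Ico.mp hq).2
    rw [Finset.mem_Ioc]; omega
  have f1 : ∑ r ∈ B, ∑ q ∈ T, (w r / tau r) * (Nat.gcd r q : ℝ) ≤ δ * 16 ^ n * 16 ^ (n+1) := by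
    rw [← hb n hn, Finset.sum_mul]
    refine Finset.sum_le_sum fun r hr => ?_
    rw [← Finset.mul_sum]
    exact hX r (hB1 r hr) T hTs
  have f2 : ∑ r ∈ B, ∑ q ∈ T, (w q / tau q) * (Nat.gcd q r : ℝ) ≤ δ * (2 * 16 ^ n) * 16 ^ (n+1) := by
    rw [Finset.sum_comm]
    have hTw : ∑ q ∈ T, w q ≤ δ * (2 * 16 ^ n) := by
      rw [hT, block_sum _ a (n+1) (by omega)]
      calc _ = ∑ i ∈ Finset.Ico a (n+1), δ * 16 ^ i :=
            Finset.sum_congr rfl fun i hi => hb i (by rw [Finset.mem_Ico] at hi ⊢; omega)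
        _ = δ * ∑ i ∈ Finset.Ico a (n+1), 16 ^ i := by rw [Finset.mul_sum]
        _ ≤ _ := mul_le_mul_of_nonneg_left (geom16 a n hn'.1) hδ
    refine le_trans ?_ (mul_le_mul_of_nonneg_right hTw (by positivity))
    rw [Finset.sum_mul]
    refine Finset.sum_le_sum fun r hr => ?_
    rw [← Finset.mul_sum]
    exact hX r (hT1 r hr) B hBs
  have hRn := hR n
  calc _ ≤ (2 * R n / 16 ^ n) * (δ * 16 ^ n * 16 ^ (n+1) + δ * (2 * 16 ^ n) * 16 ^ (n+1)) := by
        gcongr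
    _ = _ := by rw [pow_succ]; field_simp; ring

lemma prime_lemma : ∃ y0 : ℝ, 1 ≤ y0 ∧ ∀ y : ℝ, y0 ≤ y →
    y ≤ (((Finset.Ioc ⌊y⌋₊ ⌊8*y⌋₊).filter Nat.Prime).card : ℝ) * Real.log (8*y) := by
  have h1 : ∀ᶠ x : ℝ in atTop, Real.log x ≤ 1/100 * Real.sqrt x := by
    have := (isLittleO_log_rpow_atTop (r := 1/2) (by norm_num)).bound (c := 1/100) (by norm_num)
    filter_upwards [this, eventually_ge_atTop 1] with x hx hx1
    rw [Real.norm_of_nonneg (Real.log_nonneg hx1), Real.norm_of_nonneg (by positivity)] at hx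
    rwa [Real.sqrt_eq_rpow]
  obtain ⟨x0, hx0⟩ := Filter.eventually_atTop.mp h1
  refine ⟨max x0 10, le_trans (by norm_num) (le_max_right _ _), fun y hy => ?_⟩
  have hy10 : 10 ≤ y := (le_max_right _ _).trans hy
  have hyx : x0 ≤ y := (le_max_left _ _).trans hy
  set x := 8 * y with hx
  have hl := hx0 x (by linarith)
  have hsq : Real.sqrt x * Real.sqrt x = x := Real.mul_self_sqrt (by linarith)
  have hs1 : 1 ≤ Real.sqrt x := by rw [Real.one_le_sqrt]; linarith
  have hs0 : Real.sqrt x ≤ x := by nlinarith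
  have ha : Real.sqrt x * Real.log x ≤ x / 100 := by
    have := mul_le_mul_of_nonneg_left hl (le_trans zero_le_one hs1)
    nlinarith
  have hb : Real.log (x + 2) ≤ x / 50 := by
    have : Real.log (x + 2) ≤ Real.log (x ^ 2) := Real.log_le_log (by linarith) (by nlinarith)
    rw [Real.log_pow] at this
    push_cast at this
    linarith
  have hth := Chebyshev.theta_ge' (x := x) (by linarith)
  have hth2 := Chebyshev.theta_le_log4_mul_x (x := y) (by linarith)
  have hlog4 : Real.log 4 = 2 * Real.log 2 := by
    rw [show (4:ℝ) = 2 ^ 2 by norm_num, Real.log_pow]; norm_num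
  have hlog2 := Real.log_two_gt_d9
  have hlog2' := Real.log_two_lt_d9
  have hdiff : y ≤ Chebyshev.theta x - Chebyshev.theta y := by
    rw [hlog4] at hth2
    nlinarith
  refine hdiff.trans ?_
  have hfl : ⌊y⌋₊ ≤ ⌊x⌋₊ := Nat.floor_mono (by linarith)
  have : Chebyshev.theta x = Chebyshev.theta y
      + ∑ p ∈ (Finset.Ioc ⌊y⌋₊ ⌊x⌋₊).filter Nat.Prime, Real.log p := by
    unfold Chebyshev.theta
    rw [Finset.sum_filter, Finset.sum_filter, Finset.sum_filter,
      Finset.sum_Ioc_consecutive _ (Nat.zero_le _) hfl]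
  rw [this, add_sub_cancel_left, ← nsmul_eq_mul]
  refine Finset.sum_le_card_nsmul _ _ _ fun p hp => ?_
  rw [Finset.mem_filter, Finset.mem_Ioc] at hp
  refine Real.log_le_log (by exact_mod_cast hp.2.pos) ?_
  exact (Nat.cast_le.mpr hp.1.2).trans (Nat.floor_le (by linarith))

/-- squarefree numbers up to `Y` -/
def SF (Y : ℕ) : Finset ℕ := (Finset.Icc 1 Y).filter Squarefree

lemma sf_harm (Y : ℕ) : Real.log Y ≤ 2 * ∑ N ∈ SF Y, (1 / N : ℝ) := by
  have h1 : Real.log Y ≤ ∑ n ∈ Finset.Icc 1 Y, (1 / n : ℝ) := by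
    rcases Nat.eq_zero_or_pos Y with h | h
    · simp [h]
    have := log_add_one_le_harmonic Y
    rw [harmonic_eq_sum_Icc] at this
    push_cast at this
    simp only [one_div]
    refine le_trans (Real.log_le_log (by positivity) ?_) this
    push_cast; linarith
  have h2 : ∑ n ∈ Finset.Icc 1 Y, (1 / n : ℝ) ≤
      (∑ N ∈ SF Y, (1 / N : ℝ)) * ∑ k ∈ Finset.Icc 1 Y, (1 / (k:ℝ)^2) := by
    rw [Finset.sum_mul_sum, ← Finset.sum_product']
    have hex : ∀ n : ℕ, ∃ p : ℕ × ℕ, p.2 ^ 2 * p.1 = n ∧ Squarefree p.1 := by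
      intro n
      obtain ⟨a, b, h1, h2⟩ := Nat.sq_mul_squarefree n
      exact ⟨(a, b), h1, h2⟩
    choose φ hφ1 hφ2 using hex
    have hinj : Function.Injective φ := fun m n h => by rw [← hφ1 m, ← hφ1 n, h]
    have hval : ∀ n : ℕ, (1 / n : ℝ) = (fun p : ℕ × ℕ => (1 / p.1 : ℝ) * (1 / (p.2:ℝ)^2)) (φ n) := by
      intro n
      have : ((φ n).2 ^ 2 * (φ n).1 : ℝ) = n := by exact_mod_cast hφ1 n
      simp only
      rw [← this, one_div_mul_one_div, mul_comm]
    rw [Finset.sum_congr rfl fun n _ => hval n, ← Finset.sum_image (s := Finset.Icc 1 Y)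
      (f := fun p : ℕ × ℕ => (1 / p.1 : ℝ) * (1 / (p.2:ℝ)^2)) (g := φ) (hinj.injOn)]
    refine Finset.sum_le_sum_of_subset_of_nonneg ?_ fun p _ _ => by positivity
    intro p hp
    obtain ⟨n, hn, rfl⟩ := Finset.mem_image.mp hp
    rw [Finset.mem_Icc] at hn
    have e := hφ1 n
    have h1 : (φ n).1 ≠ 0 := fun h => by rw [h] at e; omega
    have h2 : (φ n).2 ≠ 0 := fun h => by rw [h] at e; simp at e; omega
    rw [Finset.mem_product, SF, Finset.mem_filter, Finset.mem_Icc, Finset.mem_Icc]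
    have h1' := Nat.pos_of_ne_zero h1
    have h2' := Nat.pos_of_ne_zero h2
    refine ⟨⟨⟨h1', ?_⟩, hφ2 n⟩, h2', ?_⟩
    · nlinarith [pow_pos h2' 2]
    · nlinarith
  have h3 : ∑ k ∈ Finset.Icc 1 Y, (1 / (k:ℝ)^2) ≤ 2 := by
    have key : ∀ Z : ℕ, ∑ k ∈ Finset.Icc 1 Z, (1 / (k:ℝ)^2) ≤ 2 - 1 / (Z : ℝ) := by
      intro Z
      induction Z with
      | zero => simp
      | succ n ih =>
        rw [Finset.sum_Icc_succ_top (by omega)]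
        rcases Nat.eq_zero_or_pos n with h | h
        · subst h; norm_num
        have hn : (0:ℝ) < n := by exact_mod_cast h
        have : (1:ℝ) / ((n+1 : ℕ) : ℝ)^2 ≤ 1 / n - 1 / ((n + 1 : ℕ) : ℝ) := by
          push_cast
          rw [div_sub_div _ _ (by positivity) (by positivity), div_le_div_iff₀ (by positivity) (by positivity)]
          nlinarith
        linarith
    have h := key Y
    have : (0:ℝ) ≤ 1 / (Y : ℝ) := by positivity
    linarith
  have h4 : 0 ≤ ∑ N ∈ SF Y, (1 / N : ℝ) := Finset.sum_nonneg fun _ _ => by positivity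
  calc _ ≤ _ := h1
    _ ≤ _ := h2
    _ ≤ (∑ N ∈ SF Y, (1 / N : ℝ)) * 2 := by gcongr
    _ = _ := mul_comm _ _

lemma tau_mul_coprime {a b : ℕ} (h : Nat.Coprime a b) : tau (a * b) = tau a * tau b := by
  unfold tau; rw [h.card_divisors_mul]; push_cast; rfl

lemma sf_conv (Y : ℕ) :
    ∑ N ∈ SF Y, (1 / N : ℝ) ≤ (∑ m ∈ SF Y, 1 / (m * tau m)) ^ 2 := by
  rw [sq, Finset.sum_mul_sum, ← Finset.sum_product']
  have h1 : ∀ N ∈ SF Y, (1 / N : ℝ) = ∑ p ∈ N.divisorsAntidiagonal,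
      (1 / (p.1 * tau p.1)) * (1 / (p.2 * tau p.2)) := by
    intro N hN
    rw [SF, Finset.mem_filter, Finset.mem_Icc] at hN
    have hc : ∀ p ∈ N.divisorsAntidiagonal,
        (1 / (p.1 * tau p.1)) * (1 / (p.2 * tau p.2)) = 1 / (N * tau N) := by
      intro p hp
      have e := (Nat.mem_divisorsAntidiagonal.mp hp).1
      have : Nat.Coprime p.1 p.2 := Nat.coprime_of_squarefree_mul (by rw [e]; exact hN.2)
      rw [← e, tau_mul_coprime this, one_div_mul_one_div]
      push_cast; congr 1; ring
    rw [Finset.sum_congr rfl hc, Finset.sum_const, nsmul_eq_mul]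
    have ht := tau_pos hN.1.1
    have : (N.divisorsAntidiagonal.card : ℝ) = tau N := by
      unfold tau
      rw [← Nat.map_div_right_divisors, Finset.card_map]
    rw [this]
    have : (0:ℝ) < N := by exact_mod_cast hN.1.1
    field_simp
  rw [Finset.sum_congr rfl h1, Finset.sum_sigma']
  rw [← Finset.sum_image (g := fun x : (_ : ℕ) × ℕ × ℕ => x.2)
    (f := fun p : ℕ × ℕ => (1 / (p.1 * tau p.1)) * (1 / (p.2 * tau p.2)))]
  · refine Finset.sum_le_sum_of_subset_of_nonneg ?_ fun p _ _ => by unfold tau; positivity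
    intro p hp
    obtain ⟨⟨N, p'⟩, hn, rfl⟩ := Finset.mem_image.mp hp
    rw [Finset.mem_sigma] at hn
    obtain ⟨hN, hp'⟩ := hn
    simp only at hN hp' ⊢
    rw [SF, Finset.mem_filter, Finset.mem_Icc] at hN
    obtain ⟨e, hN0⟩ := Nat.mem_divisorsAntidiagonal.mp hp'
    have hd1 : p'.1 ∣ N := ⟨p'.2, e.symm⟩
    have hd2 : p'.2 ∣ N := ⟨p'.1, by rw [mul_comm]; exact e.symm⟩
    rw [Finset.mem_product, SF, Finset.mem_filter, Finset.mem_filter, Finset.mem_Icc, Finset.mem_Icc]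
    have hNp : 0 < N := hN.1.1
    exact ⟨⟨⟨Nat.pos_of_dvd_of_pos hd1 hNp, (Nat.le_of_dvd hNp hd1).trans hN.1.2⟩,
        hN.2.squarefree_of_dvd hd1⟩,
      ⟨⟨Nat.pos_of_dvd_of_pos hd2 hNp, (Nat.le_of_dvd hNp hd2).trans hN.1.2⟩,
        hN.2.squarefree_of_dvd hd2⟩⟩
  · rintro ⟨N, p⟩ hx ⟨N', p'⟩ hx' hpp
    simp only [Finset.coe_sigma, Set.mem_sigma_iff, Finset.mem_coe] at hx hx'
    simp only at hpp
    subst hpp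
    have e1 := (Nat.mem_divisorsAntidiagonal.mp hx.2).1
    have e2 := (Nat.mem_divisorsAntidiagonal.mp hx'.2).1
    obtain rfl : N = N' := by rw [← e1, ← e2]
    rfl

lemma lower_bound : ∃ n0 : ℕ, 1 ≤ n0 ∧ ∀ n ≥ n0,
    (1/24) * 16 ^ n / Real.sqrt n ≤ ∑ q ∈ Finset.Ico (16 ^ n) (16 ^ (n+1)), 1 / tau q := by
  obtain ⟨y0, hy01, hy0⟩ := prime_lemma
  obtain ⟨k0, hk0⟩ := pow_unbounded_of_one_lt y0 (show (1:ℝ) < 16 by norm_num)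
  refine ⟨2 * k0 + 2, by omega, fun n hn => ?_⟩
  set k := n / 2 with hk
  set Y := 16 ^ k with hY
  have hkn : k ≤ n - k := by omega
  have hn0 : (0:ℝ) < n := by have : 0 < n := by omega
                             exact_mod_cast this
  have hlog16 : Real.log 16 = 4 * Real.log 2 := by
    rw [show (16:ℝ) = 2 ^ 4 by norm_num, Real.log_pow]; norm_num
  have hlog2 := Real.log_two_gt_d9
  have hlog2' := Real.log_two_lt_d9
  -- the sum over squarefree m
  set G := ∑ m ∈ SF Y, 1 / (m * tau m) with hG
  have hG0 : 0 ≤ G := Finset.sum_nonneg fun m _ => by unfold tau; positivity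
  have hGn : Real.sqrt n / 2 ≤ G := by
    have h1 := sf_harm Y
    have h2 := sf_conv Y
    have h3 : Real.log Y = k * Real.log 16 := by rw [hY]; push_cast; rw [Real.log_pow]
    have h4 : (n:ℝ) ≤ 4 * k := by
      have : n ≤ 4 * k := by omega
      exact_mod_cast this
    have h5 : (n:ℝ) / 4 ≤ G ^ 2 := by
      rw [h3, hlog16] at h1
      nlinarith
    have h6 : (Real.sqrt n / 2) ^ 2 ≤ G ^ 2 := by
      rw [div_pow, Real.sq_sqrt hn0.le]; linarith
    exact (pow_le_pow_iff_left₀ (by positivity) hG0 (by norm_num)).mp h6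
  let y : ℕ → ℝ := fun m => 16 ^ n / m
  let P : ℕ → Finset ℕ := fun m => (Finset.Ioc ⌊y m⌋₊ ⌊8 * y m⌋₊).filter Nat.Prime
  have hm : ∀ m ∈ SF Y, 1 ≤ m ∧ m ≤ Y ∧ 0 < (m:ℝ) ∧ (16:ℝ)^(n-k) ≤ y m ∧ y m ≤ 16 ^ n := by
    intro m hm
    rw [SF, Finset.mem_filter, Finset.mem_Icc] at hm
    have hm0 : 0 < (m:ℝ) := by exact_mod_cast hm.1.1
    refine ⟨hm.1.1, hm.1.2, hm0, ?_, ?_⟩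
    · rw [le_div_iff₀ hm0]
      have : (m:ℝ) ≤ 16 ^ k := by exact_mod_cast hm.1.2
      calc (16:ℝ)^(n-k) * m ≤ 16^(n-k) * 16 ^ k := by gcongr
        _ = 16 ^ n := by rw [← pow_add]; congr 1; omega
    · rw [div_le_iff₀ hm0]
      have : (1:ℝ) ≤ m := by exact_mod_cast hm.1.1
      have h16 : (0:ℝ) < 16 ^ n := by positivity
      nlinarith
  have hP : ∀ m ∈ SF Y, ∀ p ∈ P m, p.Prime ∧ 16 ^ n < m * p ∧ m * p ≤ 8 * 16 ^ n ∧ Y < p := by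
    intro m hmS p hp
    obtain ⟨h1, h2, h3, h4, h5⟩ := hm m hmS
    simp only [P, Finset.mem_filter, Finset.mem_Ioc] at hp
    have hy0' : 0 ≤ y m := le_trans (by positivity) h4
    have hlt : y m < p := (Nat.floor_lt hy0').mp hp.1.1
    have hle : (p:ℝ) ≤ 8 * y m := (Nat.le_floor_iff (by positivity)).mp hp.1.2
    have hym : y m * m = 16 ^ n := by simp only [y]; field_simp
    refine ⟨hp.2, ?_, ?_, ?_⟩
    · have : (16:ℝ) ^ n < m * p := by nlinarith
      exact_mod_cast this
    · have : (m:ℝ) * p ≤ 8 * 16 ^ n := by nlinarith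
      exact_mod_cast this
    · have : (Y:ℝ) < p := by
        refine lt_of_le_of_lt ?_ hlt
        refine le_trans ?_ h4
        rw [hY]; push_cast
        exact pow_le_pow_right₀ (by norm_num) hkn
      exact_mod_cast this
  have hcop : ∀ m ∈ SF Y, ∀ p ∈ P m, Nat.Coprime m p := by
    intro m hmS p hp
    obtain ⟨h1, h2, -⟩ := hm m hmS
    obtain ⟨g1, g2, g3, g4⟩ := hP m hmS p hp
    exact (Nat.coprime_of_lt_prime (by omega) (lt_of_le_of_lt h2 g4) g1).symm
  -- lower bound by the pairs
  have hpairs : ∑ m ∈ SF Y, ∑ p ∈ P m, 1 / tau (m * p)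
      ≤ ∑ q ∈ Finset.Ico (16 ^ n) (16 ^ (n+1)), 1 / tau q := by
    rw [Finset.sum_sigma']
    rw [← Finset.sum_image (g := fun x : (_ : ℕ) × ℕ => x.1 * x.2) (f := fun q => 1 / tau q)]
    · refine Finset.sum_le_sum_of_subset_of_nonneg ?_ fun p _ _ => by unfold tau; positivity
      intro q hq
      obtain ⟨⟨m, p⟩, hmp, rfl⟩ := Finset.mem_image.mp hq
      rw [Finset.mem_sigma] at hmp
      obtain ⟨g1, g2, g3, g4⟩ := hP m hmp.1 p hmp.2
      rw [Finset.mem_Ico, pow_succ]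
      have : 0 < 16 ^ n := by positivity
      constructor
      · exact g2.le
      · show m * p < _
        omega
    · rintro ⟨m, p⟩ hx ⟨m', p'⟩ hx' hpp
      simp only [Finset.coe_sigma, Set.mem_sigma_iff, Finset.mem_coe] at hx hx'
      simp only at hpp
      obtain ⟨g1, g2, g3, g4⟩ := hP m hx.1 p hx.2
      obtain ⟨g1', g2', g3', g4'⟩ := hP m' hx'.1 p' hx'.2
      obtain ⟨h1, h2, -⟩ := hm m hx.1
      obtain ⟨h1', h2', -⟩ := hm m' hx'.1
      have hd : p ∣ m' * p' := ⟨m, by rw [← hpp, mul_comm]⟩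
      have hpp' : p = p' := by
        rcases g1.dvd_mul.mp hd with h | h
        · have := Nat.le_of_dvd (by omega) h
          omega
        · exact (Nat.prime_dvd_prime_iff_eq g1 g1').mp h
      subst hpp'
      have := Nat.eq_of_mul_eq_mul_right g1.pos hpp
      subst this
      rfl
  refine le_trans ?_ hpairs
  have hinner : ∀ m ∈ SF Y, (16:ℝ) ^ n / (12 * n) * (1 / (m * tau m)) ≤ ∑ p ∈ P m, 1 / tau (m * p) := by
    intro m hmS
    obtain ⟨h1, h2, h3, h4, h5⟩ := hm m hmS
    have ht := tau_pos h1
    have e1 : ∀ p ∈ P m, 1 / tau (m * p) = 1 / (tau m * 2) := by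
      intro p hp
      rw [tau_mul_coprime (hcop m hmS p hp)]
      have : tau p = 2 := by
        unfold tau
        rw [Nat.Prime.divisors (hP m hmS p hp).1, Finset.card_pair (hP m hmS p hp).1.one_lt.ne]
        norm_num
      rw [this]
    rw [Finset.sum_congr rfl e1, Finset.sum_const, nsmul_eq_mul]
    have hyy : y0 ≤ y m := by
      refine le_trans hk0.le (le_trans ?_ h4)
      exact pow_le_pow_right₀ (by norm_num) (by omega)
    have hc := hy0 (y m) hyy
    have hypos : 0 < y m := by linarith
    have hlog : Real.log (8 * y m) ≤ 6 * n := by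
      have : Real.log (8 * y m) ≤ Real.log (16 ^ (n+1)) :=
        Real.log_le_log (by positivity) (by rw [pow_succ]; nlinarith)
      rw [Real.log_pow, hlog16] at this
      push_cast at this
      have hn1 : (1:ℝ) ≤ n := by exact_mod_cast (by omega : 1 ≤ n)
      nlinarith
    have hcard : y m ≤ (P m).card * (6 * n) := hc.trans (by gcongr)
    have hcard2 : y m / (6 * n) ≤ (P m).card := by rw [div_le_iff₀ (by positivity)]; exact hcard
    calc (16:ℝ) ^ n / (12 * n) * (1 / (m * tau m)) = y m / (6 * n) * (1 / (tau m * 2)) := by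
          simp only [y]; field_simp; norm_num
      _ ≤ _ := by gcongr
  refine le_trans ?_ (Finset.sum_le_sum hinner)
  rw [← Finset.mul_sum, ← hG]
  have hs : 0 < Real.sqrt n := Real.sqrt_pos.mpr hn0
  calc (1/24) * 16 ^ n / Real.sqrt n = (16:ℝ) ^ n / (12 * (Real.sqrt n * Real.sqrt n)) * (Real.sqrt n / 2) := by
        field_simp; norm_num
    _ = (16:ℝ) ^ n / (12 * n) * (Real.sqrt n / 2) := by rw [Real.mul_self_sqrt hn0.le]
    _ ≤ _ := by gcongr

lemma one_le_log1 (x : ℝ) : 1 ≤ log1 x := le_max_left _ _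

lemma log1_mono {x y : ℝ} (hx : 0 < x) (h : x ≤ y) : log1 x ≤ log1 y :=
  max_le_max le_rfl (Real.log_le_log hx h)

lemma iterlog_succ' (j : ℕ) (x : ℝ) : iterlog (j+1) x = iterlog j (log1 x) := by
  induction j with
  | zero => rfl
  | succ j ih => rw [iterlog, ih, iterlog]

lemma one_le_iterlog_succ (j : ℕ) (x : ℝ) : 1 ≤ iterlog (j+1) x := by
  rw [iterlog]; exact one_le_log1 _

lemma iterlog_pos (j : ℕ) {x : ℝ} (hx : 0 < x) : 0 < iterlog j x := by
  cases j with
  | zero => exact hx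
  | succ j => exact lt_of_lt_of_le one_pos (one_le_iterlog_succ j x)

lemma iterlog_mono (j : ℕ) {x y : ℝ} (hx : 0 < x) (h : x ≤ y) : iterlog j x ≤ iterlog j y := by
  induction j with
  | zero => exact h
  | succ j ih => rw [iterlog, iterlog]; exact log1_mono (iterlog_pos j hx) ih

/-- The product of iterated logarithms appearing in the series. -/
noncomputable def GG (ε : ℝ) (k : ℕ) (x : ℝ) : ℝ :=
  (∏ i ∈ Finset.range k, iterlog i x) * iterlog k x ^ (1 + ε)

lemma GG_pos (ε : ℝ) (k : ℕ) {x : ℝ} (hx : 0 < x) : 0 < GG ε k x := by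
  unfold GG
  exact mul_pos (Finset.prod_pos fun i _ => iterlog_pos i hx)
    (Real.rpow_pos_of_pos (iterlog_pos k hx) _)

lemma GG_mono {ε : ℝ} (hε : 0 < ε) (k : ℕ) {x y : ℝ} (hx : 0 < x) (h : x ≤ y) :
    GG ε k x ≤ GG ε k y := by
  unfold GG
  refine mul_le_mul ?_ ?_ ?_ ?_
  · exact Finset.prod_le_prod (fun i _ => (iterlog_pos i hx).le) fun i _ => iterlog_mono i hx h
  · exact Real.rpow_le_rpow (iterlog_pos k hx).le (iterlog_mono k hx h) (by linarith)
  · exact (Real.rpow_pos_of_pos (iterlog_pos k hx) _).le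
  · exact Finset.prod_nonneg fun i _ => (iterlog_pos i (hx.trans_le h)).le

lemma GG_succ (ε : ℝ) (k : ℕ) (x : ℝ) : GG ε (k+1) x = x * GG ε k (log1 x) := by
  unfold GG
  rw [Finset.prod_range_succ', iterlog_succ']
  simp only [iterlog_succ']
  simp only [iterlog]
  ring

lemma log1_lower {c : ℝ} (hc : 0 < c) : ∃ c' > (0:ℝ), ∀ j : ℕ,
    max 1 (c' * j) ≤ log1 (max 1 (c * 2 ^ j)) := by
  set L := max 0 (- Real.log c) with hL
  have hL0 : 0 ≤ L := le_max_left _ _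
  have hL1 : - Real.log c ≤ L := le_max_right _ _
  have h2 : 0 < Real.log 2 := Real.log_pos (by norm_num)
  refine ⟨Real.log 2 / (1 + L), by positivity, fun j => max_le (one_le_log1 _) ?_⟩
  by_cases h : Real.log 2 / (1 + L) * j ≤ 1
  · exact h.trans (one_le_log1 _)
  · push Not at h
    have hp : (0:ℝ) < 1 + L := by linarith
    rw [div_mul_eq_mul_div, lt_div_iff₀ hp] at h
    have h3 : Real.log (c * 2 ^ j) = Real.log c + Real.log 2 * j := by
      rw [Real.log_mul hc.ne' (by positivity), Real.log_pow]; ring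
    have h4 : Real.log (c * 2 ^ j) ≤ log1 (max 1 (c * 2 ^ j)) := by
      refine le_trans (Real.log_le_log (by positivity) (le_max_right 1 _)) (le_max_right _ _)
    refine le_trans ?_ h4
    rw [h3, div_mul_eq_mul_div, div_le_iff₀ hp]
    nlinarith

lemma summable_GG {ε : ℝ} (hε : 0 < ε) (k : ℕ) : ∀ c : ℝ, 0 < c →
    Summable (fun j : ℕ => 1 / GG ε k (max 1 (c * j))) := by
  induction k with
  | zero =>
    intro c hc
    have hs : Summable (fun n : ℕ => 1 / (n:ℝ) ^ (1 + ε)) :=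
      Real.summable_one_div_nat_rpow.mpr (by linarith)
    rw [← summable_nat_add_iff 1] at hs ⊢
    refine Summable.of_nonneg_of_le ?_ ?_ (hs.mul_left (1 / c ^ (1 + ε)))
    · intro j
      exact (one_div_pos.mpr (GG_pos _ _ (lt_of_lt_of_le one_pos (le_max_left _ _)))).le
    · intro j
      rw [one_div_mul_one_div, ← Real.mul_rpow hc.le (by positivity)]
      have h1 : GG ε 0 (max 1 (c * ((j + 1 : ℕ) : ℝ))) = (max 1 (c * ((j + 1 : ℕ) : ℝ))) ^ (1 + ε) := by
        simp [GG, iterlog]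
      rw [h1]
      have h0 : 0 < c * ((j + 1 : ℕ) : ℝ) := by positivity
      exact one_div_le_one_div_of_le (Real.rpow_pos_of_pos h0 _)
        (Real.rpow_le_rpow h0.le (le_max_right _ _) (by linarith))
  | succ k ih =>
    intro c hc
    have hpos : ∀ x : ℝ, 0 < max 1 x := fun x => lt_of_lt_of_le one_pos (le_max_left _ _)
    rw [← summable_condensed_iff_of_nonneg]
    · obtain ⟨c', hc', hlow⟩ := log1_lower hc
      refine Summable.of_nonneg_of_le ?_ ?_ ((ih c' hc').mul_left (1 / c))
      · intro j
        exact mul_nonneg (by positivity) (one_div_pos.mpr (GG_pos _ _ (hpos _))).le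
      · intro j
        rw [GG_succ]
        push_cast
        have h1 : c * 2 ^ j ≤ max 1 (c * 2 ^ j) := le_max_right _ _
        have h2 := GG_mono hε k (hpos _) (hlow j)
        have h3 := GG_pos ε k (hpos (c' * j))
        rw [one_div_mul_one_div, mul_one_div, div_le_div_iff₀ (by
          exact mul_pos (hpos _) (h3.trans_le h2)) (by positivity)]
        have h4 := mul_le_mul h1 h2 h3.le (hpos _).le
        linarith
    · intro n
      exact (one_div_pos.mpr (GG_pos _ _ (hpos _))).le
    · intro m n _ hmn
      refine one_div_le_one_div_of_le (GG_pos _ _ (hpos _)) (GG_mono hε _ (hpos _) ?_)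
      refine max_le_max le_rfl ?_
      have : (m:ℝ) ≤ n := by exact_mod_cast hmn
      gcongr

lemma summable_of_dyadic (a b : ℕ → ℝ) (ha : ∀ n, 0 ≤ a n) (hb0 : ∀ n, 0 ≤ b n) (hb : Summable b)
    (J : ℕ) (h : ∀ j ≥ J, ∑ n ∈ Finset.Ico (2 ^ j) (2 ^ (j+1)), a n ≤ b j) : Summable a := by
  refine summable_of_sum_range_le (c := ∑ n ∈ Finset.range (2 ^ J), a n + ∑' j, b j) ha fun n => ?_
  have key : ∀ m ≥ J, ∑ n ∈ Finset.range (2 ^ m), a n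
      ≤ ∑ n ∈ Finset.range (2 ^ J), a n + ∑ j ∈ Finset.Ico J m, b j := by
    intro m hm
    induction m, hm using Nat.le_induction with
    | base => simp
    | succ m hm ih =>
      rw [Finset.sum_Ico_succ_top hm, ← Finset.sum_range_add_sum_Ico a
        (Nat.pow_le_pow_right (by norm_num) (Nat.le_succ m) : 2 ^ m ≤ 2 ^ (m+1))]
      linarith [h m hm]
  have h1 : ∑ i ∈ Finset.range n, a i ≤ ∑ i ∈ Finset.range (2 ^ (max n J)), a i := by
    refine Finset.sum_le_sum_of_subset_of_nonneg ?_ fun i _ _ => ha i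
    intro i hi
    rw [Finset.mem_range] at hi ⊢
    exact hi.trans ((Nat.lt_two_pow_self).trans_le (Nat.pow_le_pow_right (by norm_num) (le_max_left _ _)))
  have h2 := key (max n J) (le_max_right _ _)
  have h3 := hb.sum_le_tsum (Finset.Ico J (max n J)) (fun i _ => hb0 i)
  linarith

lemma diverg (ψ : ℕ → ℝ) (hψ0 : ∀ q, 0 ≤ ψ q)
    (hψdec : ∀ q r : ℕ, 1 ≤ q → q ≤ r → ψ r ≤ ψ q) (ε : ℝ) (hε : 0 < ε) (k : ℕ) (hk : 2 ≤ k)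
    (hns : ¬ Summable (fun q : ℕ => ψ q /
        (Real.sqrt (iterlog 1 q) * (∏ j ∈ Finset.Ico 2 k, iterlog j q) *
          iterlog k q ^ (1 + ε)))) (J : ℕ) (B : ℝ) :
    ∃ j ≥ J, B * √(2 ^ j) < ∑ n ∈ Finset.Ico (2 ^ j) (2 ^ (j+1)),
      16 ^ n * min (ψ (16 ^ (n+1))) (1/4) := by
  by_contra hcon
  push Not at hcon
  apply hns
  obtain ⟨l, rfl⟩ := Nat.exists_eq_add_of_le hk
  set R : ℕ → ℝ := fun n => min (ψ (16 ^ (n+1))) (1/4) with hR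
  have hR0 : ∀ n, 0 ≤ R n := fun n => le_min (hψ0 _) (by norm_num)
  have hD : ∀ q : ℕ, Real.sqrt (iterlog 1 q) * (∏ j ∈ Finset.Ico 2 (2 + l), iterlog j q) *
          iterlog (2 + l) q ^ (1 + ε) = √(iterlog 1 q) * GG ε l (iterlog 2 q) := by
    intro q
    have h1 : ∀ i, iterlog (2 + i) (q:ℝ) = iterlog i (iterlog 2 q) := by
      intro i
      rw [add_comm, iterlog_succ', iterlog_succ']
      rfl
    rw [GG, Finset.prod_Ico_eq_prod_range, h1, Nat.add_sub_cancel_left, mul_assoc]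
    simp only [h1]
  simp only [hD]
  have hi1 : ∀ q : ℕ, 0 < iterlog 1 (q:ℝ) := fun q => lt_of_lt_of_le one_pos (one_le_iterlog_succ 0 _)
  have hi2 : ∀ q : ℕ, 0 < iterlog 2 (q:ℝ) := fun q => lt_of_lt_of_le one_pos (one_le_iterlog_succ 1 _)
  have hDpos : ∀ q : ℕ, 0 < √(iterlog 1 q) * GG ε l (iterlog 2 q) := fun q =>
    mul_pos (Real.sqrt_pos.mpr (hi1 q)) (GG_pos _ _ (hi2 q))
  have hDmono : ∀ q r : ℕ, 1 ≤ q → q ≤ r → √(iterlog 1 q) * GG ε l (iterlog 2 q)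
      ≤ √(iterlog 1 r) * GG ε l (iterlog 2 r) := by
    intro q r hq hqr
    have hq' : (0:ℝ) < q := by exact_mod_cast hq
    have hqr' : (q:ℝ) ≤ r := by exact_mod_cast hqr
    exact mul_le_mul (Real.sqrt_le_sqrt (iterlog_mono 1 hq' hqr'))
      (GG_mono hε l (hi2 q) (iterlog_mono 2 hq' hqr')) (GG_pos _ _ (hi2 q)).le (Real.sqrt_nonneg _)
  rw [← summable_schlomilch_iff_of_nonneg (C := 16) (u := fun n => 16 ^ n)
    (fun n => div_nonneg (hψ0 n) (hDpos n).le)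
    (fun m n hm hmn => div_le_div₀ (hψ0 m) (hψdec m n hm hmn) (hDpos m) (hDmono m n hm hmn))
    (fun n => by positivity) (pow_right_strictMono₀ (by norm_num)) (by norm_num)
    (by intro n; simp only [pow_succ, smul_eq_mul]; omega)]
  rw [← summable_nat_add_iff 1]
  -- summability of the truncated series
  have hlow : ∀ j n : ℕ, 2 ^ j ≤ n → √(2 ^ j) * GG ε l (max 1 ((1/2) * j)) ≤
      √(iterlog 1 ((16 ^ (n+1) : ℕ):ℝ)) * GG ε l (iterlog 2 ((16 ^ (n+1) : ℕ):ℝ)) := by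
    intro j n hn
    have hn' : (2:ℝ) ^ j ≤ n := by exact_mod_cast hn
    have hl2 := Real.log_two_gt_d9
    have h16 : Real.log 16 = 4 * Real.log 2 := by
      rw [show (16:ℝ) = 2 ^ 4 by norm_num, Real.log_pow]; norm_num
    have h1 : (2:ℝ) ^ j ≤ iterlog 1 ((16 ^ (n+1) : ℕ):ℝ) := by
      have : iterlog 1 ((16 ^ (n+1) : ℕ):ℝ) = max 1 (Real.log ((16 ^ (n+1) : ℕ):ℝ)) := rfl
      rw [this]
      refine le_trans ?_ (le_max_right _ _)
      push_cast
      rw [Real.log_pow, h16]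
      push_cast
      nlinarith [(Nat.cast_nonneg n : (0:ℝ) ≤ n)]
    have h2 : max 1 ((1/2:ℝ) * j) ≤ iterlog 2 ((16 ^ (n+1) : ℕ):ℝ) := by
      have : iterlog 2 ((16 ^ (n+1) : ℕ):ℝ) = log1 (iterlog 1 ((16 ^ (n+1) : ℕ):ℝ)) := rfl
      rw [this]
      refine le_trans ?_ (log1_mono (by positivity) h1)
      refine max_le_max le_rfl ?_
      rw [Real.log_pow]
      nlinarith [(Nat.cast_nonneg j : (0:ℝ) ≤ j)]
    have hp : (0:ℝ) < max 1 ((1/2:ℝ) * j) := lt_of_lt_of_le one_pos (le_max_left _ _)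
    exact mul_le_mul (Real.sqrt_le_sqrt h1) (GG_mono hε l hp h2) (GG_pos _ _ hp).le (Real.sqrt_nonneg _)
  have hsum : Summable (fun n : ℕ => 16 ^ n * R n /
      (√(iterlog 1 ((16 ^ (n+1) : ℕ):ℝ)) * GG ε l (iterlog 2 ((16 ^ (n+1) : ℕ):ℝ)))) := by
    have hp : ∀ j : ℕ, (0:ℝ) < max 1 ((1/2:ℝ) * j) :=
      fun j => lt_of_lt_of_le one_pos (le_max_left _ _)
    refine summable_of_dyadic _ (fun j => |B| * (1 / GG ε l (max 1 ((1/2:ℝ) * j)))) ?_ ?_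
      ((summable_GG hε l (1/2) (by norm_num)).mul_left _) J ?_
    · intro n
      exact div_nonneg (mul_nonneg (by positivity) (hR0 n)) (hDpos _).le
    · intro j
      exact mul_nonneg (abs_nonneg _) (one_div_pos.mpr (GG_pos _ _ (hp j))).le
    · intro j hj
      have hg := GG_pos ε l (hp j)
      have hsq : 0 < √((2:ℝ) ^ j) := Real.sqrt_pos.mpr (by positivity)
      calc _ ≤ ∑ n ∈ Finset.Ico (2 ^ j) (2 ^ (j+1)), 16 ^ n * R n /
              (√(2 ^ j) * GG ε l (max 1 ((1/2) * j))) := by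
            refine Finset.sum_le_sum fun n hn => ?_
            rw [Finset.mem_Ico] at hn
            exact div_le_div_of_nonneg_left (mul_nonneg (by positivity) (hR0 n))
              (mul_pos hsq hg) (hlow j n hn.1)
        _ = (∑ n ∈ Finset.Ico (2 ^ j) (2 ^ (j+1)), 16 ^ n * R n) /
              (√(2 ^ j) * GG ε l (max 1 ((1/2) * j))) := by rw [Finset.sum_div]
        _ ≤ (|B| * √(2 ^ j)) / (√(2 ^ j) * GG ε l (max 1 ((1/2) * j))) := by
            refine div_le_div_of_nonneg_right ?_ (mul_pos hsq hg).le
            exact (hcon j hj).trans (mul_le_mul_of_nonneg_right (le_abs_self B) hsq.le)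
        _ = _ := by field_simp
  -- eventually R n = ψ
  have hev : ∀ᶠ n : ℕ in atTop, R n = ψ (16 ^ (n+1)) := by
    have ht := (tendsto_pow_const_div_const_pow_of_one_lt 1 (r := (16:ℝ)) (by norm_num)).const_mul |B|
    rw [mul_zero] at ht
    filter_upwards [ht.eventually_lt_const (show (0:ℝ) < 1/4 by norm_num),
      eventually_ge_atTop (2 ^ J)] with n hn1 hn2
    have hn0 : n ≠ 0 := by have := Nat.one_le_two_pow (n := J); omega
    have hj : J ≤ Nat.log 2 n := Nat.le_log_of_pow_le (by norm_num) hn2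
    have hmem : n ∈ Finset.Ico (2 ^ Nat.log 2 n) (2 ^ (Nat.log 2 n + 1)) :=
      Finset.mem_Ico.mpr ⟨Nat.pow_log_le_self 2 hn0, Nat.lt_pow_succ_log_self (by norm_num) n⟩
    have h1 := (Finset.single_le_sum (f := fun n => 16 ^ n * R n)
      (fun i _ => mul_nonneg (by positivity) (hR0 i)) hmem).trans (hcon _ hj)
    have h2 : √((2:ℝ) ^ Nat.log 2 n) ≤ n := by
      have h3 : ((2:ℝ) ^ Nat.log 2 n) ≤ n := by exact_mod_cast Nat.pow_log_le_self 2 hn0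
      have h4 : (1:ℝ) ≤ n := by exact_mod_cast Nat.one_le_iff_ne_zero.mpr hn0
      rw [Real.sqrt_le_left (by linarith)]
      nlinarith
    have h5 : 16 ^ n * R n ≤ |B| * n := by
      refine h1.trans ?_
      exact mul_le_mul (le_abs_self B) h2 (Real.sqrt_nonneg _) (abs_nonneg _)
    have h6 : R n < 1/4 := by
      have hp : (0:ℝ) < 16 ^ n := by positivity
      rw [pow_one, mul_div_assoc', div_lt_iff₀ hp] at hn1
      nlinarith
    rcases min_choice (ψ (16 ^ (n+1))) (1/4) with h | h
    · exact h
    · exact absurd h h6.ne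
  refine (summable_congr_atTop ?_).mpr (hsum.mul_left 240)
  filter_upwards [hev] with n hn
  rw [hn]
  push_cast
  ring

lemma small_exceptional (γ ψ : ℕ → ℝ) (hψ0 : ∀ q, 0 ≤ ψ q)
    (hψdec : ∀ q r : ℕ, 1 ≤ q → q ≤ r → ψ r ≤ ψ q)
    (hdiv : ∀ (J : ℕ) (B : ℝ), ∃ j ≥ J, B * √(2 ^ j) < ∑ n ∈ Finset.Ico (2 ^ j) (2 ^ (j+1)),
      16 ^ n * min (ψ (16 ^ (n+1))) (1/4)) (J : ℕ) (C : ℝ) (hC : 0 < C) :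
    volume {x : ℝ | x ∈ Set.Icc (0:ℝ) 1 ∧ ∀ q : ℕ, J ≤ q → 1 ≤ q →
      ψ q ≤ distNearestInt (q * x - γ q)} ≤ ENNReal.ofReal (96 / C) := by
  obtain ⟨n0, hn0, hlb⟩ := lower_bound
  obtain ⟨j, hj, hB⟩ := hdiv (max J n0) (24 * C)
  have hjJ : J ≤ j := (le_max_left _ _).trans hj
  have hjn : n0 ≤ j := (le_max_right _ _).trans hj
  have hj2 : j < 2 ^ j := Nat.lt_two_pow_self
  set R : ℕ → ℝ := fun n => min (ψ (16 ^ (n+1))) (1/4) with hR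
  have hR0 : ∀ n, 0 ≤ R n := fun n => le_min (hψ0 _) (by norm_num)
  set a := 2 ^ j with ha
  set b := 2 ^ (j+1) with hb
  have hab : a ≤ b := Nat.pow_le_pow_right (by norm_num) (Nat.le_succ j)
  set V : ℕ → ℝ := fun n => ∑ q ∈ Finset.Ico (16 ^ n) (16 ^ (n+1)), 1 / tau q with hV
  set δ : ℝ := (1/24) / √(2 ^ (j+1)) with hδ
  have hδ0 : 0 < δ := by positivity
  have hVlow : ∀ n ∈ Finset.Ico a b, δ * 16 ^ n ≤ V n := by
    intro n hn
    rw [Finset.mem_Ico] at hn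
    refine le_trans ?_ (hlb n (by omega))
    have hn1 : 1 ≤ n := by omega
    have h1 : (0:ℝ) < n := by exact_mod_cast hn1
    have h2 : (n:ℝ) ≤ 2 ^ (j+1) := by exact_mod_cast hn.2.le
    have h3 : √(n:ℝ) ≤ √(2 ^ (j+1)) := Real.sqrt_le_sqrt h2
    have h4 : 0 < √(n:ℝ) := Real.sqrt_pos.mpr h1
    rw [hδ, div_mul_eq_mul_div]
    exact div_le_div_of_nonneg_left (by positivity) h4 h3
  have hVpos : ∀ n ∈ Finset.Ico a b, 0 < V n := fun n hn =>
    lt_of_lt_of_le (by positivity) (hVlow n hn)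
  set w : ℕ → ℝ := fun q => if Nat.log 16 q ∈ Finset.Ico a b then
    (δ * 16 ^ (Nat.log 16 q) / V (Nat.log 16 q)) * (1 / tau q) else 0 with hw
  have htau0 : ∀ q, 0 ≤ tau q := fun q => Nat.cast_nonneg _
  have hw0 : ∀ q, 0 ≤ w q := by
    intro q
    simp only [hw]
    split_ifs with h
    · exact mul_nonneg (div_nonneg (by positivity) (hVpos _ h).le) (one_div_nonneg.mpr (htau0 q))
    · exact le_rfl
  have hwt : ∀ q, 1 ≤ q → w q * tau q ≤ 1 := by
    intro q hq
    simp only [hw]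
    split_ifs with h
    · rw [mul_assoc, one_div_mul_cancel (tau_pos hq).ne', mul_one, div_le_one (hVpos _ h)]
      exact hVlow _ h
    · simp
  have hlog : ∀ n r, r ∈ Finset.Ico (16 ^ n) (16 ^ (n+1)) → Nat.log 16 r = n := by
    intro n r hr
    rw [Finset.mem_Ico] at hr
    exact Nat.log_eq_of_pow_le_of_lt_pow hr.1 hr.2
  have hbs : ∀ n ∈ Finset.Ico a b, ∑ q ∈ Finset.Ico (16 ^ n) (16 ^ (n+1)), w q = δ * 16 ^ n := by
    intro n hn
    have : ∀ q ∈ Finset.Ico (16 ^ n) (16 ^ (n+1)), w q = (δ * 16 ^ n / V n) * (1 / tau q) := by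
      intro q hq
      simp only [hw]
      rw [hlog n q hq, if_pos hn]
    rw [Finset.sum_congr rfl this, ← Finset.mul_sum]
    exact div_mul_cancel₀ _ (hVpos n hn).ne'
  have hvar := var_bound a b hab w R δ hδ0.le hw0 hwt hR0 hbs
  set M : ℝ := ∑ q ∈ Finset.Ico (16 ^ a) (16 ^ b), w q * (2 * R (Nat.log 16 q)) with hM
  have hMval : M = 2 * δ * ∑ n ∈ Finset.Ico a b, 16 ^ n * R n := by
    rw [hM, block_sum _ a b hab, Finset.mul_sum]
    refine Finset.sum_congr rfl fun n hn => ?_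
    have : ∀ q ∈ Finset.Ico (16 ^ n) (16 ^ (n+1)), w q * (2 * R (Nat.log 16 q)) = w q * (2 * R n) := by
      intro q hq
      rw [hlog n q hq]
    rw [Finset.sum_congr rfl this, ← Finset.sum_mul, hbs n hn]
    ring
  have hMC : C ≤ M := by
    have h1 : √((2:ℝ) ^ (j+1)) = √2 * √(2 ^ j) := by
      rw [pow_succ, mul_comm, Real.sqrt_mul (by norm_num)]
    have h2 : √(2:ℝ) ≤ 2 := by
      rw [Real.sqrt_le_left (by norm_num)]; norm_num
    have h3 : 0 < √((2:ℝ) ^ j) := Real.sqrt_pos.mpr (by positivity)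
    have h4 : (0:ℝ) < √2 := Real.sqrt_pos.mpr (by norm_num)
    have h5 : 2 * δ * (24 * C * √(2 ^ j)) ≤ M := by
      rw [hMval]
      exact mul_le_mul_of_nonneg_left hB.le (by positivity)
    have h6 : 2 * δ * (24 * C * √(2 ^ j)) = 2 * C / √2 := by
      rw [hδ, h1]; field_simp
    rw [h6] at h5
    refine le_trans ?_ h5
    rw [le_div_iff₀ h4]
    nlinarith
  have hMpos : 0 < M := hC.trans_le hMC
  have hs1 : ∀ q ∈ Finset.Ico (16 ^ a) (16 ^ b), 1 ≤ q := by
    intro q hq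
    rw [Finset.mem_Ico] at hq
    exact (Nat.one_le_pow _ _ (by norm_num)).trans hq.1
  have hsm := second_moment (Finset.Ico (16 ^ a) (16 ^ b)) hs1 w (fun q => R (Nat.log 16 q)) γ hw0
    (fun q => hR0 _) (fun q => min_le_right _ _) 48 M hM hMpos hvar
  refine le_trans (measure_mono ?_) (hsm.trans (ENNReal.ofReal_le_ofReal ?_))
  · rintro x ⟨hx, hxq⟩
    refine ⟨hx, fun q hq => ?_⟩
    have hq1 := hs1 q hq
    rw [Finset.mem_Ico] at hq
    have hqa : a < q := (Nat.lt_pow_self (by norm_num : 1 < 16)).trans_le hq.1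
    refine le_trans ?_ (hxq q (by omega) hq1)
    refine (min_le_left _ _).trans (hψdec _ _ hq1 ?_)
    exact (Nat.lt_pow_succ_log_self (by norm_num) q).le
  · rw [show (2:ℝ) * 48 = 96 by norm_num]
    exact div_le_div_of_nonneg_left (by norm_num) hC hMC


theorem stmt0 (γ : ℕ → ℝ) (ψ : ℕ → ℝ) (hψ0 : ∀ q, 0 ≤ ψ q)
    (hψdec : ∀ q r : ℕ, 1 ≤ q → q ≤ r → ψ r ≤ ψ q)
    (hdiv : ∃ ε > (0:ℝ), ∃ k : ℕ, 2 ≤ k ∧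
      ¬ Summable (fun q : ℕ => ψ q /
        (Real.sqrt (iterlog 1 q) * (∏ j ∈ Finset.Ico 2 k, iterlog j q) *
          iterlog k q ^ (1 + ε)))) :
    volume (WSet ψ γ) = 1 := by
  obtain ⟨ε, hε, k, hk, hns⟩ := hdiv
  have hd := diverg ψ hψ0 hψdec ε hε k hk hns
  set E : ℕ → Set ℝ := fun J => {x : ℝ | x ∈ Set.Icc (0:ℝ) 1 ∧ ∀ q : ℕ, J ≤ q → 1 ≤ q →
      ψ q ≤ distNearestInt (q * x - γ q)} with hE
  have hnull : ∀ J, volume (E J) = 0 := by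
    intro J
    have h1 : ∀ᶠ C : ℝ in atTop, volume (E J) ≤ ENNReal.ofReal (96 / C) := by
      filter_upwards [eventually_gt_atTop 0] with C hC
      exact small_exceptional γ ψ hψ0 hψdec hd J C hC
    have h2 : Tendsto (fun C : ℝ => ENNReal.ofReal (96 / C)) atTop (nhds 0) := by
      have h3 : Tendsto (fun C : ℝ => 96 / C) atTop (nhds 0) := tendsto_const_nhds.div_atTop tendsto_id
      simpa using ENNReal.tendsto_ofReal h3
    exact le_antisymm (ge_of_tendsto h2 h1) (zero_le)
  have hsub : WSet ψ γ ⊆ Set.Icc 0 1 := fun x hx => hx.1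
  have hcov : Set.Icc (0:ℝ) 1 ⊆ WSet ψ γ ∪ ⋃ J, E J := by
    intro x hx
    by_cases h : {q : ℕ | 1 ≤ q ∧ distNearestInt (q * x - γ q) < ψ q}.Infinite
    · exact Or.inl ⟨hx, h⟩
    · right
      rw [Set.not_infinite] at h
      obtain ⟨N, hN⟩ := h.bddAbove
      refine Set.mem_iUnion.mpr ⟨N + 1, hx, fun q hq hq1 => ?_⟩
      by_contra hlt
      push Not at hlt
      have := hN ⟨hq1, hlt⟩
      omega
  have hvol : volume (Set.Icc (0:ℝ) 1) = 1 := by simp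
  refine le_antisymm (hvol ▸ measure_mono hsub) ?_
  calc (1:ENNReal) = volume (Set.Icc (0:ℝ) 1) := hvol.symm
    _ ≤ volume (WSet ψ γ ∪ ⋃ J, E J) := measure_mono hcov
    _ ≤ volume (WSet ψ γ) + volume (⋃ J, E J) := measure_union_le _ _
    _ = volume (WSet ψ γ) := by rw [measure_iUnion_null hnull, add_zero]
end

section
/- Let {π_1, π_2, …, π_ℓ} be a partition of ℕ and let σ_1, σ_2, …, σ_ℓ ∈ ℝ. If ψ:ℕ→ℝ≥0 is decreasing and ∑_{q=1}^∞ ψ(q) = ∞, then there exists k ∈ {1, …, ℓ} such that meas(W(𝟙_{π_k}·ψ, σ_k)) = 1, where 𝟙_{π_k}·ψ denotes the function equal to ψ(q) for q ∈ π_k and 0 otherwise. -/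
open MeasureTheory

theorem fiber_card (σ : ℝ) (X H k : ℕ) (a : ℤ) (hX : 1 ≤ X) (hHX : H ≤ X) (hk : 1 ≤ k)
    (hcop : IsCoprime (k : ℤ) a) (P : Finset (Σ _ : ℕ, ℤ))
    (hP : ∀ z ∈ P, X ≤ z.1 ∧ z.1 < X + H)
    (hPa : ∀ z ∈ P, |(k : ℝ) * (((z.2 : ℝ) + σ) / z.1) - a| < 1 / (4 * X)) :
    P.card ≤ H / k + 1 := by
  have hXr : (1 : ℝ) ≤ X := by exact_mod_cast hX
  have key : ∀ z ∈ P, |(k : ℝ) * ((z.2 : ℝ) + σ) - z.1 * a| < 1 / 2 := by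
    intro z hz
    have h1 := hP z hz
    have h2 := hPa z hz
    have hq : (0 : ℝ) < z.1 := by
      have : 0 < z.1 := by omega
      exact_mod_cast this
    have hq2 : (z.1 : ℝ) ≤ 2 * X := by
      have : z.1 ≤ 2 * X := by omega
      exact_mod_cast this
    have e : (k : ℝ) * ((z.2 : ℝ) + σ) - z.1 * a
        = z.1 * ((k : ℝ) * (((z.2 : ℝ) + σ) / z.1) - a) := by
      field_simp
    rw [e, abs_mul, abs_of_pos hq]
    calc (z.1 : ℝ) * |(k : ℝ) * (((z.2 : ℝ) + σ) / z.1) - a|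
        < z.1 * (1 / (4 * X)) := by gcongr
      _ ≤ 2 * X * (1 / (4 * X)) := by gcongr
      _ = 1 / 2 := by field_simp; norm_num
  have hinj : Set.InjOn (fun z : (Σ _ : ℕ, ℤ) => (z.1 - X) / k) P := by
    intro z hz w hw h
    simp only at h
    have hz1 := hP z hz
    have hw1 := hP w hw
    have e1 := abs_lt.1 (key z hz)
    have e2 := abs_lt.1 (key w hw)
    have e3 : (k : ℤ) * (z.2 - w.2) - ((z.1 : ℤ) - w.1) * a = 0 := by
      have : |(((k : ℤ) * (z.2 - w.2) - ((z.1 : ℤ) - w.1) * a : ℤ) : ℝ)| < 1 := by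
        push_cast
        rw [abs_lt]
        constructor <;> nlinarith
      have h5 : |(k : ℤ) * (z.2 - w.2) - ((z.1 : ℤ) - w.1) * a| < 1 := by exact_mod_cast this
      exact Int.abs_lt_one_iff.1 h5
    have hdvd : (k : ℤ) ∣ ((z.1 : ℤ) - w.1) :=
      hcop.dvd_of_dvd_mul_right ⟨z.2 - w.2, by linarith⟩
    have hq : z.1 = w.1 := by
      have hm : (w.1 - X) ≡ (z.1 - X) [MOD k] := by
        rw [Nat.modEq_iff_dvd]
        have e : (((z.1 - X : ℕ) : ℤ) - ((w.1 - X : ℕ) : ℤ)) = (z.1 : ℤ) - w.1 := by omega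
        rw [e]; exact hdvd
      have h6 := Nat.div_add_mod (z.1 - X) k
      have h7 := Nat.div_add_mod (w.1 - X) k
      rw [h] at h6
      rw [hm] at h7
      omega
    have hp : z.2 = w.2 := by
      rw [hq] at e3
      have hk0 : (k : ℤ) ≠ 0 := by omega
      have : (k : ℤ) * (z.2 - w.2) = 0 := by linarith
      rcases mul_eq_zero.1 this with h | h
      · exact absurd h hk0
      · omega
    exact Sigma.ext hq (heq_of_eq hp)
  have hmaps : Set.MapsTo (fun z : (Σ _ : ℕ, ℤ) => (z.1 - X) / k) P (Finset.range (H / k + 1)) := by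
    intro z hz
    have hz1 := hP z hz
    simp only [Finset.coe_range, Set.mem_Iio]
    exact Nat.lt_succ_of_le (Nat.div_le_div_right (by omega))
  simpa using Finset.card_le_card_of_injOn _ hmaps hinj

theorem nt_count (σ u L : ℝ) (hL : 0 < L) (X H : ℕ) (hX : 1 ≤ X) (hHX : H ≤ X) (Q : Finset ℕ)
    (hQ : ∀ q ∈ Q, X ≤ q ∧ q < X + H) :
    ∃ S : Finset ℝ, (∀ x ∈ S, u ≤ x ∧ x ≤ u + L ∧ ∃ q ∈ Q, ∃ p : ℤ, x = (p + σ) / q) ∧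
      (∀ x ∈ S, ∀ y ∈ S, x ≠ y → 1 / (8 * (X : ℝ) ^ 2) ≤ |x - y|) ∧
      (Q.card : ℝ) * (X * L - 1) - ∑ k ∈ Finset.Ico 1 H, ((k : ℝ) * L + 3) * (2 * H / k)
        ≤ S.card := by
  classical
  have hXr : (1 : ℝ) ≤ X := by exact_mod_cast hX
  set P : Finset (Σ _ : ℕ, ℤ) := Q.sigma fun q => Finset.Icc ⌈(q : ℝ) * u - σ⌉ ⌊(q : ℝ) * (u + L) - σ⌋ with hPdef
  set f : (Σ _ : ℕ, ℤ) → ℝ := fun z => ((z.2 : ℝ) + σ) / z.1 with hf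
  have hPmem : ∀ z ∈ P, X ≤ z.1 ∧ z.1 < X + H := by
    intro z hz
    rw [hPdef, Finset.mem_sigma] at hz
    exact hQ _ hz.1
  have hpos : ∀ z ∈ P, (0 : ℝ) < z.1 ∧ (z.1 : ℝ) ≤ 2 * X := by
    intro z hz
    have := hPmem z hz
    constructor
    · have : 0 < z.1 := by omega
      exact_mod_cast this
    · have : z.1 ≤ 2 * X := by omega
      exact_mod_cast this
  have hPJ : ∀ z ∈ P, u ≤ f z ∧ f z ≤ u + L := by
    intro z hz
    have h0 := (hpos z hz).1
    rw [hPdef, Finset.mem_sigma, Finset.mem_Icc, Int.ceil_le, Int.le_floor] at hz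
    simp only [hf]
    rw [le_div_iff₀ h0, div_le_iff₀ h0]
    constructor <;> nlinarith [hz.2.1, hz.2.2]
  have hPcard : (Q.card : ℝ) * (X * L - 1) ≤ P.card := by
    rw [hPdef, Finset.card_sigma]
    push_cast
    rw [← nsmul_eq_mul, ← Finset.sum_const]
    apply Finset.sum_le_sum
    intro q hq
    have h1 : (X : ℝ) ≤ q := by exact_mod_cast (hQ q hq).1
    rw [Int.card_Icc]
    have h2 := Int.lt_floor_add_one ((q : ℝ) * (u + L) - σ)
    have h3 := Int.ceil_lt_add_one ((q : ℝ) * u - σ)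
    have h4 : ((⌊(q : ℝ) * (u + L) - σ⌋ + 1 - ⌈(q : ℝ) * u - σ⌉ : ℤ) : ℝ) ≤
      (((⌊(q : ℝ) * (u + L) - σ⌋ + 1 - ⌈(q : ℝ) * u - σ⌉).toNat : ℤ) : ℝ) := by
      exact_mod_cast Int.self_le_toNat _
    push_cast at h4
    have : (X : ℝ) * L ≤ q * L := by gcongr
    push_cast
    nlinarith
  set bad : (Σ _ : ℕ, ℤ) → Prop := fun z => ∃ k ∈ Finset.Ico 1 H, ∃ a : ℤ, |(k : ℝ) * f z - a| < 1 / (4 * X) with hbad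
  set G := P.filter (fun z => ¬ bad z) with hG
  have hsep : ∀ z ∈ G, ∀ w ∈ G, z ≠ w → 1 / (8 * (X : ℝ) ^ 2) ≤ |f z - f w| := by
    intro z hz w hw hzw
    rw [hG, Finset.mem_filter] at hz hw
    by_contra! hlt
    have pz := hpos z hz.1
    have pw := hpos w hw.1
    have mz := hPmem z hz.1
    have mw := hPmem w hw.1
    have ez : (z.1 : ℝ) * f z = z.2 + σ := by
      simp only [hf]; field_simp [pz.1.ne']
    have ew : (w.1 : ℝ) * f w = w.2 + σ := by
      simp only [hf]; field_simp [pw.1.ne']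
    have hw4 : |(w.1 : ℝ) * (f w - f z)| < 1 / (4 * X) := by
      rw [abs_mul, abs_of_pos pw.1, abs_sub_comm]
      calc (w.1 : ℝ) * |f z - f w| < w.1 * (1 / (8 * (X : ℝ) ^ 2)) := by
            have := pw.1
            gcongr
        _ ≤ 2 * X * (1 / (8 * (X : ℝ) ^ 2)) := by gcongr; exact pw.2
        _ = 1 / (4 * X) := by field_simp; norm_num
    have e0 : (z.1 : ℝ) * f z - w.1 * f z = (z.2 - w.2) + w.1 * (f w - f z) := by
      rw [mul_sub, ew, ez]; ring
    rcases lt_trichotomy z.1 w.1 with h | h | h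
    · refine hz.2 ⟨w.1 - z.1, by rw [Finset.mem_Ico]; omega, w.2 - z.2, ?_⟩
      rw [Nat.cast_sub h.le]
      push_cast
      have : ((w.1 : ℝ) - z.1) * f z - (w.2 - z.2) = - (w.1 * (f w - f z)) := by linarith
      rw [this, abs_neg]; exact hw4
    · have h2 : z.2 = w.2 := by
        have : |((z.2 - w.2 : ℤ) : ℝ)| < 1 := by
          push_cast
          have : (z.2 - w.2 : ℝ) = -(w.1 * (f w - f z)) := by rw [h] at e0; linarith
          rw [this, abs_neg]
          refine hw4.trans_le ?_
          rw [div_le_one (by positivity)]; linarith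
        have h5 : |z.2 - w.2| < 1 := by exact_mod_cast this
        have := Int.abs_lt_one_iff.1 h5
        omega
      exact hzw (Sigma.ext h (heq_of_eq h2))
    · refine hz.2 ⟨z.1 - w.1, by rw [Finset.mem_Ico]; omega, z.2 - w.2, ?_⟩
      rw [Nat.cast_sub h.le]
      push_cast
      have : ((z.1 : ℝ) - w.1) * f z - (z.2 - w.2) = (w.1 * (f w - f z)) := by linarith
      rw [this]; exact hw4
  have hspos : 0 < 1 / (8 * (X : ℝ) ^ 2) := by positivity
  have hinj : Set.InjOn f G := by
    intro z hz w hw h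
    by_contra hne
    have := hsep z hz w hw hne
    rw [h, sub_self, abs_zero] at this
    linarith
  have hB : ((P.filter bad).card : ℝ) ≤ ∑ k ∈ Finset.Ico 1 H, ((k : ℝ) * L + 3) * (2 * H / k) := by
    set A : ℕ → Finset ℤ := fun k => Finset.Icc ⌈(k : ℝ) * u - 1⌉ ⌊(k : ℝ) * (u + L) + 1⌋ with hA
    set Fb : ℕ → ℤ → Finset (Σ _ : ℕ, ℤ) := fun k a =>
      P.filter (fun z => IsCoprime (k : ℤ) a ∧ |(k : ℝ) * f z - a| < 1 / (4 * X)) with hFb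
    have hsub : P.filter bad ⊆ (Finset.Ico 1 H).biUnion fun k => (A k).biUnion fun a => Fb k a := by
      intro z hz
      rw [Finset.mem_filter] at hz
      obtain ⟨hzP, k, hk, a, hka⟩ := hz
      rw [Finset.mem_Ico] at hk
      have hgpos : 0 < Int.gcd (k : ℤ) a := Int.gcd_pos_of_ne_zero_left _ (by omega)
      obtain ⟨k', a', hcop, hk', ha'⟩ := Int.exists_gcd_one hgpos
      set g := Int.gcd (k : ℤ) a with hg
      have hk'pos : 0 < k' := by
        by_contra! h
        have : k' * (g : ℤ) ≤ 0 := mul_nonpos_of_nonpos_of_nonneg h (by omega)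
        omega
      lift k' to ℕ using hk'pos.le
      have hk'eq : k = k' * g := by exact_mod_cast hk'
      have hle : k' ≤ k := by rw [hk'eq]; exact Nat.le_mul_of_pos_right _ hgpos
      have hkey : |(k' : ℝ) * f z - a'| < 1 / (4 * X) := by
        refine lt_of_le_of_lt ?_ hka
        have e : (k : ℝ) * f z - a = g * ((k' : ℝ) * f z - a') := by
          rw [hk'eq, ha']; push_cast; ring
        rw [e, abs_mul]
        have : (1 : ℝ) ≤ |(g : ℝ)| := by
          rw [abs_of_nonneg (by positivity)]; exact_mod_cast hgpos
        nlinarith [abs_nonneg ((k' : ℝ) * f z - a')]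
      rw [Finset.mem_biUnion]
      refine ⟨k', by rw [Finset.mem_Ico]; omega, ?_⟩
      rw [Finset.mem_biUnion]
      refine ⟨a', ?_, ?_⟩
      · rw [hA]
        simp only
        rw [Finset.mem_Icc, Int.ceil_le, Int.le_floor]
        have h1 : (1 : ℝ) / (4 * X) ≤ 1 := by
          rw [div_le_one (by positivity)]; linarith
        have h2 := abs_lt.1 (hkey.trans_le h1)
        have h3 := hPJ z hzP
        have h4 : (k' : ℝ) * u ≤ k' * f z := by gcongr; exact h3.1
        have h5 : (k' : ℝ) * f z ≤ k' * (u + L) := by gcongr; exact h3.2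
        constructor <;> linarith
      · rw [hFb]
        simp only [Finset.mem_filter]
        exact ⟨hzP, Int.isCoprime_iff_gcd_eq_one.2 hcop, hkey⟩
    calc ((P.filter bad).card : ℝ) ≤ (((Finset.Ico 1 H).biUnion fun k => (A k).biUnion fun a => Fb k a).card : ℝ) := by
          exact_mod_cast Finset.card_le_card hsub
      _ ≤ ∑ k ∈ Finset.Ico 1 H, (((A k).biUnion fun a => Fb k a).card : ℝ) := by
          exact_mod_cast Finset.card_biUnion_le
      _ ≤ _ := by
        apply Finset.sum_le_sum
        intro k hk
        rw [Finset.mem_Ico] at hk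
        have hkr : (1 : ℝ) ≤ k := by exact_mod_cast hk.1
        have hFc : ∀ a, ((Fb k a).card : ℝ) ≤ 2 * H / k := by
          intro a
          by_cases hc : IsCoprime (k : ℤ) a
          · have h1 : (Fb k a).card ≤ H / k + 1 := by
              apply fiber_card σ X H k a hX hHX hk.1 hc
              · intro z hz
                exact hPmem z (Finset.mem_filter.1 hz).1
              · intro z hz
                exact (Finset.mem_filter.1 hz).2.2
            have h2 : ((H / k : ℕ) : ℝ) ≤ (H : ℝ) / k := Nat.cast_div_le
            have h3 : (1 : ℝ) ≤ (H : ℝ) / k := by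
              rw [one_le_div (by linarith)]; exact_mod_cast hk.2.le
            have h4 : ((Fb k a).card : ℝ) ≤ ((H / k : ℕ) : ℝ) + 1 := by exact_mod_cast h1
            have h5 : 2 * (H : ℝ) / k = H / k + H / k := by ring
            linarith
          · have : Fb k a = ∅ := by
              rw [hFb]
              simp [hc]
            rw [this]
            simp
            positivity
        calc (((A k).biUnion fun a => Fb k a).card : ℝ) ≤ ∑ a ∈ A k, ((Fb k a).card : ℝ) := by
              exact_mod_cast Finset.card_biUnion_le
          _ ≤ ∑ a ∈ A k, (2 * (H : ℝ) / k) := Finset.sum_le_sum fun a _ => hFc a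
          _ = (A k).card * (2 * (H : ℝ) / k) := by rw [Finset.sum_const, nsmul_eq_mul]
          _ ≤ _ := by
            gcongr
            rw [hA]
            simp only
            rw [Int.card_Icc]
            have h2 := Int.floor_le ((k : ℝ) * (u + L) + 1)
            have h3 := Int.le_ceil ((k : ℝ) * u - 1)
            have hn : (0 : ℝ) ≤ k * L + 3 := by positivity
            have h4 : (((⌊(k : ℝ) * (u + L) + 1⌋ + 1 - ⌈(k : ℝ) * u - 1⌉).toNat : ℤ) : ℝ) ≤ k * L + 3 := by
              rw [Int.toNat_eq_max]
              push_cast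
              apply max_le _ hn
              linarith
            exact_mod_cast h4
  refine ⟨G.image f, ?_, ?_, ?_⟩
  · intro x hx
    rw [Finset.mem_image] at hx
    obtain ⟨z, hz, rfl⟩ := hx
    have hzP := (Finset.mem_filter.1 hz).1
    refine ⟨(hPJ z hzP).1, (hPJ z hzP).2, z.1, ?_, z.2, rfl⟩
    rw [hPdef, Finset.mem_sigma] at hzP
    exact hzP.1
  · intro x hx y hy hxy
    rw [Finset.mem_image] at hx hy
    obtain ⟨z, hz, rfl⟩ := hx
    obtain ⟨w, hw, rfl⟩ := hy
    exact hsep z hz w hw (fun h => hxy (by rw [h]))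
  · rw [Finset.card_image_of_injOn hinj]
    have := Finset.card_filter_add_card_filter_not (s := P) bad
    have h2 : ((P.filter bad).card : ℝ) + G.card = P.card := by exact_mod_cast this
    linarith

theorem bad_sum_le (L : ℝ) (hL : 0 < L) (X H : ℕ) (hX : 1 ≤ X) (hHX : H ≤ X) :
    ∑ k ∈ Finset.Ico 1 H, ((k : ℝ) * L + 3) * (2 * H / k)
      ≤ 2 * (H : ℝ) ^ 2 * L + 6 * H * (1 + Real.log X) := by
  have hXr : (1 : ℝ) ≤ X := by exact_mod_cast hX
  have h1 : ∀ k ∈ Finset.Ico 1 H, ((k : ℝ) * L + 3) * (2 * H / k) = 2 * H * L + 6 * H * (k : ℝ)⁻¹ := by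
    intro k hk
    rw [Finset.mem_Ico] at hk
    have : (k : ℝ) ≠ 0 := by
      have : k ≠ 0 := by omega
      exact_mod_cast this
    field_simp
    ring
  rw [Finset.sum_congr rfl h1, Finset.sum_add_distrib, Finset.sum_const, ← Finset.mul_sum, nsmul_eq_mul]
  have h2 : ∑ k ∈ Finset.Ico 1 H, (k : ℝ)⁻¹ ≤ 1 + Real.log X := by
    have h3 := harmonic_le_one_add_log X
    rw [harmonic_eq_sum_Icc] at h3
    push_cast at h3
    refine le_trans ?_ h3
    apply Finset.sum_le_sum_of_subset_of_nonneg
    · intro k hk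
      rw [Finset.mem_Ico] at hk
      rw [Finset.mem_Icc]; omega
    · intro i _ _
      positivity
  have h4 : ((Finset.Ico 1 H).card : ℝ) ≤ H := by
    rw [Nat.card_Ico]
    exact_mod_cast Nat.sub_le _ _
  have h5 : ((Finset.Ico 1 H).card : ℝ) * (2 * H * L) ≤ H * (2 * H * L) := by gcongr
  have h6 : 6 * (H : ℝ) * ∑ k ∈ Finset.Ico 1 H, (k : ℝ)⁻¹ ≤ 6 * H * (1 + Real.log X) := by gcongr
  nlinarith

theorem sep_card (S : Finset ℝ) (s a b : ℝ) (hs : 0 < s) (hab : a ≤ b)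
    (hS : ∀ x ∈ S, a ≤ x ∧ x ≤ b) (hsep : ∀ x ∈ S, ∀ y ∈ S, x ≠ y → s ≤ |x - y|) :
    (S.card : ℝ) ≤ (b - a) / s + 2 := by
  have hinj : Set.InjOn (fun x : ℝ => ⌊x / s⌋) S := by
    intro x hx y hy h
    by_contra hne
    have h1 := hsep x hx y hy hne
    have h2 := Int.abs_sub_lt_one_of_floor_eq_floor h
    rw [← sub_div, abs_div, abs_of_pos hs, div_lt_one hs] at h2
    linarith
  have hmaps : Set.MapsTo (fun x : ℝ => ⌊x / s⌋) S (Finset.Icc ⌊a / s⌋ ⌊b / s⌋) := by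
    intro x hx
    have := hS x hx
    simp only [Finset.coe_Icc, Set.mem_Icc]
    constructor
    · apply Int.floor_le_floor; gcongr; exact this.1
    · apply Int.floor_le_floor; gcongr; exact this.2
  have h := Finset.card_le_card_of_injOn _ hmaps hinj
  rw [Int.card_Icc] at h
  have h2 := Int.floor_le (b / s)
  have h3 := Int.lt_floor_add_one (a / s)
  have hn : (0 : ℝ) ≤ (b - a) / s + 2 := by
    have : 0 ≤ b - a := by linarith
    positivity
  have h4 : (((⌊b / s⌋ + 1 - ⌊a / s⌋).toNat : ℤ) : ℝ) ≤ (b - a) / s + 2 := by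
    rw [Int.toNat_eq_max]
    push_cast
    apply max_le _ hn
    rw [sub_div]
    linarith
  have h5 : (S.card : ℝ) ≤ (((⌊b / s⌋ + 1 - ⌊a / s⌋).toNat : ℤ) : ℝ) := by exact_mod_cast h
  linarith

/-- For large `X`, a proportion `1/ℓ` of the window gives many separated points. -/
theorem nt_asymp (ℓ : ℕ) (hℓ : 1 ≤ ℓ) (σ u L : ℝ) (hL : 0 < L) :
    ∃ X0 : ℕ, ∀ X H : ℕ, X0 ≤ X → 4 * ℓ * H = X → ∀ Q : Finset ℕ,
      (∀ q ∈ Q, X ≤ q ∧ q < X + H) → (H : ℝ) ≤ ℓ * Q.card →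
    ∃ S : Finset ℝ, (∀ x ∈ S, u ≤ x ∧ x ≤ u + L ∧ ∃ q ∈ Q, ∃ p : ℤ, x = (p + σ) / q) ∧
      (∀ x ∈ S, ∀ y ∈ S, x ≠ y → 1 / (8 * (X : ℝ) ^ 2) ≤ |x - y|) ∧
      1 / (16 * (ℓ : ℝ) ^ 2) * L * (X : ℝ) ^ 2 ≤ S.card ∧ (S.card : ℝ) ≤ 16 * L * (X : ℝ) ^ 2 := by
  have hℓr : (1 : ℝ) ≤ ℓ := by exact_mod_cast hℓ
  have hc : 0 < L / (8 * ℓ * 6) := by positivity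
  have ho := (Real.isLittleO_log_id_atTop.def hc)
  have ho' := tendsto_natCast_atTop_atTop (R := ℝ) |>.eventually ho
  have hbig := tendsto_natCast_atTop_atTop (R := ℝ) |>.eventually
    (Filter.eventually_ge_atTop (max 1 (max (1 / L) (56 * ℓ / L))))
  obtain ⟨X0, hX0⟩ := Filter.eventually_atTop.1 (ho'.and hbig)
  refine ⟨X0, ?_⟩
  intro X H hX hHX Q hQ hQc
  obtain ⟨h1, h2⟩ := hX0 X hX
  have hX1 : (1 : ℝ) ≤ X := le_trans (le_max_left _ _) h2
  have hX2 : 1 / L ≤ X := le_trans (le_trans (le_max_left _ _) (le_max_right _ _)) h2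
  have hX3 : 56 * ℓ / L ≤ X := le_trans (le_trans (le_max_right _ _) (le_max_right _ _)) h2
  rw [div_le_iff₀ hL] at hX2 hX3
  have hX1n : 1 ≤ X := by exact_mod_cast hX1
  have hHle : H ≤ X := by rw [← hHX]; exact Nat.le_mul_of_pos_left _ (by omega)
  have hlog : Real.log X ≤ L / (8 * ℓ * 6) * X := by
    have : ‖Real.log X‖ ≤ L / (8 * ℓ * 6) * ‖(X : ℝ)‖ := h1
    rw [Real.norm_of_nonneg (by positivity : (0 : ℝ) ≤ X)] at this
    exact (le_abs_self _).trans this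
  obtain ⟨S, hS1, hS2, hS3⟩ := nt_count σ u L hL X H hX1n hHle Q hQ
  refine ⟨S, hS1, hS2, ?_, ?_⟩
  · have hb := bad_sum_le L hL X H hX1n hHle
    have hXH : (X : ℝ) = 4 * ℓ * H := by exact_mod_cast hHX.symm
    have hH0 : (0 : ℝ) ≤ H := by positivity
    have hq : (H : ℝ) / ℓ * (X * L - 1) ≤ Q.card * (X * L - 1) := by
      apply mul_le_mul_of_nonneg_right _ (by linarith)
      rw [div_le_iff₀ (by positivity)]; linarith
    have hmain : (H : ℝ) * (X * L / (4 * ℓ)) ≤ H / ℓ * (X * L - 1) - (2 * (H : ℝ) ^ 2 * L + 6 * H * (1 + Real.log X)) := by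
      have e : H / ℓ * (X * L - 1) - (2 * (H : ℝ) ^ 2 * L + 6 * H * (1 + Real.log X))
          = H * ((X * L - 1) / ℓ - 2 * H * L - 6 * (1 + Real.log X)) := by ring
      rw [e]
      apply mul_le_mul_of_nonneg_left _ hH0
      have e2 : 2 * (H : ℝ) * L = X * L / (2 * ℓ) := by rw [hXH]; field_simp; ring
      rw [e2]
      have e3 : 6 * Real.log X ≤ X * L / (8 * ℓ) := by
        calc 6 * Real.log X ≤ 6 * (L / (8 * ℓ * 6) * X) := by linarith
          _ = _ := by field_simp
      have e4 : 7 ≤ X * L / (8 * ℓ) := by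
        rw [le_div_iff₀ (by positivity)]; linarith
      have e5 : (X * L - 1) / ℓ = X * L / ℓ - 1 / ℓ := by ring
      have e6 : (1 : ℝ) / ℓ ≤ 1 := by rw [div_le_one (by linarith)]; exact hℓr
      have e7 : X * L / ℓ = 8 * (X * L / (8 * ℓ)) := by field_simp
      have e8 : X * L / (2 * ℓ) = 4 * (X * L / (8 * ℓ)) := by field_simp; norm_num
      have e9 : X * L / (4 * ℓ) = 2 * (X * L / (8 * ℓ)) := by field_simp; norm_num
      rw [e5, e7, e8, e9]
      linarith
    have e : 1 / (16 * (ℓ : ℝ) ^ 2) * L * (X : ℝ) ^ 2 = (H : ℝ) * (X * L / (4 * ℓ)) := by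
      rw [hXH]; field_simp; norm_num
    rw [e]
    linarith
  · have h := sep_card S (1 / (8 * (X : ℝ) ^ 2)) u (u + L) (by positivity) (by linarith)
      (fun x hx => ⟨(hS1 x hx).1, (hS1 x hx).2.1⟩) hS2
    have e : (u + L - u) / (1 / (8 * (X : ℝ) ^ 2)) = 8 * L * (X : ℝ) ^ 2 := by field_simp; ring
    rw [e] at h
    nlinarith

/-- The covering step. -/
theorem ubiq (u L c : ℝ) (hL : 0 < L) (hc : 0 < c) (M : ℕ) (hM : 2 ≤ M)
    (hMc : 192 ≤ c * ((M : ℝ) ^ 2 - 1))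
    (n0 : ℕ) (S : ℕ → Finset ℝ) (b : ℕ → ℝ) (hb0 : ∀ n, 0 ≤ b n) (hb1 : ∀ n, b n ≤ 1 / 16)
    (hb : ¬ Summable b)
    (hsep : ∀ n ≥ n0, ∀ x ∈ S n, ∀ y ∈ S n, x ≠ y → 1 / (8 * ((M : ℝ) ^ n) ^ 2) ≤ |x - y|)
    (hlow : ∀ n ≥ n0, b n ≠ 0 → c * L * ((M : ℝ) ^ n) ^ 2 ≤ (S n).card)
    (hup : ∀ n ≥ n0, ((S n).card : ℝ) ≤ 16 * L * ((M : ℝ) ^ n) ^ 2) :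
    ∃ n1, ENNReal.ofReal (c / 64 * L) ≤
      volume (⋃ m ∈ Finset.Ico n0 n1, ⋃ x ∈ S m, Metric.ball x (b m / ((M : ℝ) ^ m) ^ 2)) := by
  classical
  have hMr : (2 : ℝ) ≤ M := by exact_mod_cast hM
  set X : ℕ → ℝ := fun n => (M : ℝ) ^ n with hX
  have hXpos : ∀ n, 0 < X n := fun n => by simp only [hX]; positivity
  set ρ : ℕ → ℝ := fun n => b n / (X n) ^ 2 with hρ
  have hρ0 : ∀ n, 0 ≤ ρ n := fun n => div_nonneg (hb0 n) (by positivity)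
  have hρX : ∀ n, ρ n * (X n) ^ 2 = b n := fun n => by
    have := (hXpos n).ne'
    simp only [hρ]; field_simp
  set F : ℕ → Set ℝ := fun n => ⋃ m ∈ Finset.Ico n0 n, ⋃ x ∈ S m, Metric.ball x (ρ m) with hF
  set s : ℕ → ℝ := fun n => ∑ m ∈ Finset.Ico n0 n, ((S m).card : ℝ) * ρ m with hs
  have hgeom : ∀ n, ∑ m ∈ Finset.Ico n0 n, (X m) ^ 2 ≤ (X n) ^ 2 / ((M : ℝ) ^ 2 - 1) := by
    intro n
    have h1 : (1 : ℝ) < (M : ℝ) ^ 2 := by nlinarith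
    calc ∑ m ∈ Finset.Ico n0 n, (X m) ^ 2 ≤ ∑ m ∈ Finset.range n, (X m) ^ 2 := by
          apply Finset.sum_le_sum_of_subset_of_nonneg
          · intro k hk
            rw [Finset.mem_Ico] at hk
            rw [Finset.mem_range]; omega
          · intro i _ _
            positivity
      _ = ∑ m ∈ Finset.range n, ((M : ℝ) ^ 2) ^ m := by
          apply Finset.sum_congr rfl
          intro m _
          simp only [hX]; ring
      _ = (((M : ℝ) ^ 2) ^ n - 1) / ((M : ℝ) ^ 2 - 1) := geom_sum_eq h1.ne' n
      _ ≤ _ := by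
          have : 0 < (M : ℝ) ^ 2 - 1 := by linarith
          have e : (X n) ^ 2 = ((M : ℝ) ^ 2) ^ n := by simp only [hX]; ring
          rw [e]
          gcongr
          linarith
  have step : ∀ n ≥ n0, s n ≤ c / 64 * L → ENNReal.ofReal (s n) ≤ volume (F n) →
      ENNReal.ofReal (s (n + 1)) ≤ volume (F (n + 1)) := by
    intro n hn hsn hFn
    have hs1 : s (n + 1) = s n + (S n).card * ρ n := by
      simp only [hs]; rw [Finset.sum_Ico_succ_top hn]
    have hF1 : F (n + 1) = F n ∪ ⋃ x ∈ S n, Metric.ball x (ρ n) := by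
      simp only [hF]
      rw [← Finset.insert_Ico_right_eq_Ico_add_one hn, Finset.set_biUnion_insert, Set.union_comm]
    by_cases hbn : b n = 0
    · have : ρ n = 0 := by simp [hρ, hbn]
      rw [hs1, hF1, this]
      simpa using hFn
    · set G := (S n).filter (fun x => Disjoint (Metric.ball x (ρ n)) (F n)) with hG
      have hbad : (((S n).filter (fun x => ¬ Disjoint (Metric.ball x (ρ n)) (F n))).card : ℝ)
          ≤ (S n).card / 2 := by
        set N : ℝ → ℕ → Finset ℝ := fun y m => (S n).filter (fun x => |x - y| ≤ ρ m + ρ n) with hN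
        have hsub : (S n).filter (fun x => ¬ Disjoint (Metric.ball x (ρ n)) (F n)) ⊆
            (Finset.Ico n0 n).biUnion fun m => (S m).biUnion fun y => N y m := by
          intro x hx
          rw [Finset.mem_filter, Set.not_disjoint_iff] at hx
          obtain ⟨hxS, z, hz1, hz2⟩ := hx
          simp only [hF, Set.mem_iUnion] at hz2
          obtain ⟨m, hm, y, hy, hzy⟩ := hz2
          rw [Finset.mem_biUnion]
          refine ⟨m, hm, ?_⟩
          rw [Finset.mem_biUnion]
          refine ⟨y, hy, ?_⟩
          simp only [hN, Finset.mem_filter]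
          refine ⟨hxS, ?_⟩
          rw [Metric.mem_ball, Real.dist_eq] at hz1 hzy
          have := abs_sub_le x z y
          rw [abs_sub_comm x z] at this
          linarith
        have hNc : ∀ y m, ((N y m).card : ℝ) ≤ 16 * (X n) ^ 2 * ρ m + 3 := by
          intro y m
          have hXn := hXpos n
          have h := sep_card (N y m) (1 / (8 * (X n) ^ 2)) (y - (ρ m + ρ n)) (y + (ρ m + ρ n)) (by positivity)
            (by linarith [hρ0 m, hρ0 n])
            (by
              intro x hx
              have := abs_le.1 (Finset.mem_filter.1 hx).2
              constructor <;> linarith)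
            (by
              intro x hx z hz
              exact hsep n hn x (Finset.mem_filter.1 hx).1 z (Finset.mem_filter.1 hz).1)
          have e : (y + (ρ m + ρ n) - (y - (ρ m + ρ n))) / (1 / (8 * (X n) ^ 2))
              = 16 * (X n) ^ 2 * ρ m + 16 * (ρ n * (X n) ^ 2) := by field_simp; ring
          rw [e, hρX] at h
          linarith [hb1 n]
        have h1 : (((S n).filter (fun x => ¬ Disjoint (Metric.ball x (ρ n)) (F n))).card : ℝ)
            ≤ ∑ m ∈ Finset.Ico n0 n, ((S m).card : ℝ) * (16 * (X n) ^ 2 * ρ m + 3) := by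
          calc _ ≤ (((Finset.Ico n0 n).biUnion fun m => (S m).biUnion fun y => N y m).card : ℝ) := by
                exact_mod_cast Finset.card_le_card hsub
            _ ≤ ∑ m ∈ Finset.Ico n0 n, (((S m).biUnion fun y => N y m).card : ℝ) := by
                exact_mod_cast Finset.card_biUnion_le
            _ ≤ _ := by
                apply Finset.sum_le_sum
                intro m _
                calc (((S m).biUnion fun y => N y m).card : ℝ) ≤ ∑ y ∈ S m, ((N y m).card : ℝ) := by
                      exact_mod_cast Finset.card_biUnion_le
                  _ ≤ ∑ y ∈ S m, (16 * (X n) ^ 2 * ρ m + 3) := Finset.sum_le_sum fun y _ => hNc y m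
                  _ = _ := by rw [Finset.sum_const, nsmul_eq_mul]
        have h2 : ∑ m ∈ Finset.Ico n0 n, ((S m).card : ℝ) * (16 * (X n) ^ 2 * ρ m + 3)
            = 16 * (X n) ^ 2 * s n + 3 * ∑ m ∈ Finset.Ico n0 n, ((S m).card : ℝ) := by
          simp only [hs]
          rw [Finset.mul_sum, Finset.mul_sum, ← Finset.sum_add_distrib]
          apply Finset.sum_congr rfl
          intro m _
          ring
        have h3 : ∑ m ∈ Finset.Ico n0 n, ((S m).card : ℝ) ≤ 16 * L * ((X n) ^ 2 / ((M : ℝ) ^ 2 - 1)) := by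
          calc ∑ m ∈ Finset.Ico n0 n, ((S m).card : ℝ) ≤ ∑ m ∈ Finset.Ico n0 n, 16 * L * (X m) ^ 2 := by
                apply Finset.sum_le_sum
                intro m hm
                exact hup m (Finset.mem_Ico.1 hm).1
            _ = 16 * L * ∑ m ∈ Finset.Ico n0 n, (X m) ^ 2 := by rw [Finset.mul_sum]
            _ ≤ _ := by
                have := hgeom n
                gcongr
        have hM1 : 0 < (M : ℝ) ^ 2 - 1 := by nlinarith
        have h4 : 3 * (16 * L * ((X n) ^ 2 / ((M : ℝ) ^ 2 - 1))) ≤ c / 4 * L * (X n) ^ 2 := by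
          have e : 3 * (16 * L * ((X n) ^ 2 / ((M : ℝ) ^ 2 - 1))) = (48 * (L * (X n) ^ 2)) / ((M : ℝ) ^ 2 - 1) := by ring
          rw [e, div_le_iff₀ hM1]
          have : 0 ≤ L * (X n) ^ 2 := by positivity
          nlinarith
        have h5 : 16 * (X n) ^ 2 * s n ≤ 16 * (X n) ^ 2 * (c / 64 * L) := by gcongr
        have h6 : c * L * (X n) ^ 2 ≤ (S n).card := hlow n hn hbn
        nlinarith
      have hGc : ((S n).card : ℝ) / 2 ≤ G.card := by
        have := Finset.card_filter_add_card_filter_not (s := S n) (fun x => Disjoint (Metric.ball x (ρ n)) (F n))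
        have h2 : (G.card : ℝ) + ((S n).filter (fun x => ¬ Disjoint (Metric.ball x (ρ n)) (F n))).card = (S n).card := by
          exact_mod_cast this
        linarith
      have hdisj : (G : Set ℝ).PairwiseDisjoint (fun x => Metric.ball x (ρ n)) := by
        intro x hx y hy hxy
        apply Metric.ball_disjoint_ball
        have h1 := hsep n hn x (Finset.mem_filter.1 hx).1 y (Finset.mem_filter.1 hy).1 hxy
        rw [Real.dist_eq]
        refine le_trans ?_ h1
        rw [le_div_iff₀ (by have := hXpos n; positivity)]
        have := hρX n
        have := hb1 n
        simp only [hX] at *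
        nlinarith
      have hvol : volume (⋃ x ∈ G, Metric.ball x (ρ n)) = ENNReal.ofReal (G.card * (2 * ρ n)) := by
        rw [measure_biUnion_finset hdisj (fun _ _ => Metric.isOpen_ball.measurableSet)]
        simp only [Real.volume_ball, Finset.sum_const, nsmul_eq_mul]
        rw [ENNReal.ofReal_mul (p := (G.card : ℝ)) (by positivity), ENNReal.ofReal_natCast]
      have hFG : Disjoint (F n) (⋃ x ∈ G, Metric.ball x (ρ n)) := by
        rw [Set.disjoint_iUnion₂_right]
        intro x hx
        exact (Finset.mem_filter.1 hx).2.symm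
      have hsn0 : 0 ≤ s n := Finset.sum_nonneg fun m _ => mul_nonneg (by positivity) (hρ0 m)
      calc ENNReal.ofReal (s (n + 1)) ≤ ENNReal.ofReal (s n + G.card * (2 * ρ n)) := by
            apply ENNReal.ofReal_le_ofReal
            rw [hs1]
            nlinarith [hρ0 n]
        _ = ENNReal.ofReal (s n) + ENNReal.ofReal (G.card * (2 * ρ n)) :=
            ENNReal.ofReal_add hsn0 (by have := hρ0 n; positivity)
        _ ≤ volume (F n) + volume (⋃ x ∈ G, Metric.ball x (ρ n)) := by
            rw [hvol]; gcongr
        _ = volume (F n ∪ ⋃ x ∈ G, Metric.ball x (ρ n)) := by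
            rw [measure_union hFG]
            exact Finset.measurableSet_biUnion _ fun _ _ => Metric.isOpen_ball.measurableSet
        _ ≤ volume (F (n + 1)) := by
            apply measure_mono
            rw [hF1]
            apply Set.union_subset_union_right
            exact Set.biUnion_subset_biUnion_left (fun x hx => (Finset.mem_filter.1 hx).1)
  have hex : ∃ n, c / 64 * L < s n := by
    by_contra! hall
    apply hb
    have hcL : 0 < c * L := by positivity
    rw [← summable_nat_add_iff n0]
    apply summable_of_sum_range_le (c := 1 / 64) (fun n => hb0 _)
    intro n
    have h1 := hall (n + n0)
    have h2 : c * L * ∑ i ∈ Finset.range n, b (i + n0) ≤ s (n + n0) := by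
      simp only [hs]
      rw [Finset.sum_Ico_eq_sum_range, Finset.mul_sum, Nat.add_sub_cancel]
      apply Finset.sum_le_sum
      intro i _
      rw [add_comm i n0]
      by_cases h0 : b (n0 + i) = 0
      · rw [h0, mul_zero]
        exact mul_nonneg (by positivity) (hρ0 _)
      · rw [← hρX]
        have := mul_le_mul_of_nonneg_right (hlow (n0 + i) (by omega) h0) (hρ0 (n0 + i))
        simp only [hX] at *
        linarith
    have h3 : c * L * ∑ i ∈ Finset.range n, b (i + n0) ≤ c * L * (1 / 64) := by linarith
    exact le_of_mul_le_mul_left h3 hcL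
  refine ⟨Nat.find hex, ?_⟩
  have hind : ∀ n, n0 ≤ n → n ≤ Nat.find hex → ENNReal.ofReal (s n) ≤ volume (F n) := by
    intro n hn
    induction n, hn using Nat.le_induction with
    | base => intro _; simp [hs]
    | succ n hn ih =>
      intro h
      apply step n hn _ (ih (by omega))
      have := Nat.find_min hex (m := n) (by omega)
      linarith
  have hspec := Nat.find_spec hex
  have hn0 : n0 ≤ Nat.find hex := by
    by_contra! h
    have : s (Nat.find hex) = 0 := by
      simp only [hs]
      rw [Finset.Ico_eq_empty (by omega)]; simp
    rw [this] at hspec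
    have : 0 < c / 64 * L := by positivity
    linarith
  exact (ENNReal.ofReal_le_ofReal hspec.le).trans (hind _ hn0 le_rfl)

theorem null_of_density (B : Set ℝ) (η : ℝ) (hη : 0 < η) (hη2 : η < 2)
    (h : ∀ x r : ℝ, 0 < r → volume (B ∩ Metric.closedBall x r) ≤ ENNReal.ofReal ((2 - η) * r)) :
    volume B = 0 := by
  have h1 := Besicovitch.ae_tendsto_measure_inter_div (volume : Measure ℝ) B
  have h2 : ∀ᵐ x ∂((volume : Measure ℝ).restrict B), False := by
    filter_upwards [h1] with x hx
    have h3 : ∀ᶠ r in nhdsWithin (0 : ℝ) (Set.Ioi 0),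
        volume (B ∩ Metric.closedBall x r) / volume (Metric.closedBall x r) ≤ ENNReal.ofReal ((2 - η) / 2) := by
      filter_upwards [self_mem_nhdsWithin] with r hr
      rw [Set.mem_Ioi] at hr
      rw [Real.volume_closedBall]
      refine (ENNReal.div_le_div_right (h x r hr) _).trans ?_
      rw [← ENNReal.ofReal_div_of_pos (by linarith)]
      apply ENNReal.ofReal_le_ofReal
      apply le_of_eq
      field_simp
    have h4 := le_of_tendsto hx h3
    rw [ENNReal.one_le_ofReal] at h4
    linarith
  rw [Filter.eventually_false_iff_eq_bot, ae_eq_bot, Measure.restrict_eq_zero] at h2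
  exact h2

theorem not_summable_condensed (M : ℕ) (hM : 2 ≤ M) (ψ : ℕ → ℝ) (hψ0 : ∀ q, 0 ≤ ψ q)
    (hψdec : ∀ q r : ℕ, 1 ≤ q → q ≤ r → ψ r ≤ ψ q) (hdiv : ¬ Summable ψ) :
    ¬ Summable (fun n => (M : ℝ) ^ n * ψ (M ^ (n + 1)) / 2) := by
  intro hsum
  apply hdiv
  rw [← summable_schlomilch_iff_of_nonneg (C := M) (u := fun n => M ^ n) hψ0
    (fun m n hm hmn => hψdec m n hm hmn) (fun n => by positivity)
    (pow_right_strictMono₀ (by omega)) (by omega)]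
  · rw [← summable_nat_add_iff 1]
    have := hsum.mul_left (2 * ((M : ℝ) - 1) * M)
    refine this.congr ?_
    intro n
    push_cast
    ring
  · intro n
    simp only [smul_eq_mul]
    apply le_of_eq
    rw [Nat.mul_sub]
    congr 1 <;> ring

theorem local_bound (ℓ : ℕ) (hℓ : 1 ≤ ℓ) (A : Set ℕ) (σ : ℝ) (ψ : ℕ → ℝ)
    (hψ0 : ∀ q, 0 ≤ ψ q)
    (hψdec : ∀ q r : ℕ, 1 ≤ q → q ≤ r → ψ r ≤ ψ q) (Q : ℕ → Finset ℕ) (b : ℕ → ℝ)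
    (hQ : ∀ n, ∀ q ∈ Q n, q ∈ A ∧ (64 * ℓ) ^ n ≤ q ∧ q < (64 * ℓ) ^ n + 16 * (64 * ℓ) ^ (n - 1))
    (hb0 : ∀ n, 0 ≤ b n) (hb1 : ∀ n, b n ≤ 1 / 16)
    (hbψ : ∀ n, b n ≤ ((64 * ℓ : ℕ) : ℝ) ^ n * ψ ((64 * ℓ) ^ (n + 1)) / 2)
    (hbQ : ∀ n, b n ≠ 0 → ((16 * (64 * ℓ) ^ (n - 1) : ℕ) : ℝ) ≤ ℓ * (Q n).card)
    (hb : ¬ Summable b) (N : ℕ) :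
    volume {α : ℝ | ∀ q, N ≤ q → 1 ≤ q → ¬ distNearestInt (q * α - σ) < A.indicator ψ q} = 0 := by
  classical
  have hℓr : (1 : ℝ) ≤ ℓ := by exact_mod_cast hℓ
  set M := 64 * ℓ with hMdef
  have hM : 2 ≤ M := by omega
  have hMr : (M : ℝ) = 64 * ℓ := by rw [hMdef]; push_cast; ring
  set c : ℝ := 1 / (16 * (ℓ : ℝ) ^ 2) with hc
  have hc0 : 0 < c := by positivity
  have hc1 : c ≤ 1 := by
    rw [hc, div_le_one (by positivity)]; nlinarith
  apply null_of_density _ (c / 64) (by positivity) (by linarith)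
  intro x r hr
  obtain ⟨X0, hX0⟩ := nt_asymp ℓ hℓ σ (x - r / 2) r hr
  have hten : Filter.Tendsto (fun n : ℕ => M ^ n) Filter.atTop Filter.atTop :=
    tendsto_pow_atTop_atTop_of_one_lt (by omega)
  obtain ⟨m, hm⟩ := exists_nat_ge (1 / r)
  obtain ⟨n0, hn0⟩ := Filter.eventually_atTop.1
    ((hten.eventually (Filter.eventually_ge_atTop (max X0 (max N m)))).and (Filter.eventually_ge_atTop 1))
  have hS : ∀ n, ∃ S : Finset ℝ, n ≥ n0 →
      (∀ y ∈ S, x - r / 2 ≤ y ∧ y ≤ x - r / 2 + r ∧ ∃ q ∈ Q n, ∃ p : ℤ, y = (p + σ) / q) ∧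
      (∀ y ∈ S, ∀ z ∈ S, y ≠ z → 1 / (8 * ((M : ℝ) ^ n) ^ 2) ≤ |y - z|) ∧
      (b n ≠ 0 → c * r * ((M : ℝ) ^ n) ^ 2 ≤ S.card) ∧ (S.card : ℝ) ≤ 16 * r * ((M : ℝ) ^ n) ^ 2 := by
    intro n
    by_cases hn : n ≥ n0
    · by_cases hbn : b n = 0
      · refine ⟨∅, fun _ => ⟨by simp, by simp, fun h => absurd hbn h, ?_⟩⟩
        simp only [Finset.card_empty, Nat.cast_zero]
        positivity
      · obtain ⟨h1, h2⟩ := hn0 n hn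
        obtain ⟨S, s1, s2, s3, s4⟩ := hX0 (M ^ n) (16 * M ^ (n - 1)) (le_trans (le_max_left _ _) h1)
          (by
            obtain ⟨j, rfl⟩ : ∃ j, n = j + 1 := ⟨n - 1, by omega⟩
            rw [Nat.add_sub_cancel, pow_succ, hMdef]; ring)
          (Q n) (fun q hq => (hQ n q hq).2) (hbQ n hbn)
        push_cast at s2 s3 s4
        exact ⟨S, fun _ => ⟨s1, s2, fun _ => s3, s4⟩⟩
    · exact ⟨∅, fun h => absurd h hn⟩
  choose S hS using hS
  obtain ⟨n1, hn1⟩ := ubiq (x - r / 2) r c hr hc0 M hM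
    (by
      rw [hMr, hc, div_mul_eq_mul_div, le_div_iff₀ (by positivity)]
      nlinarith)
    n0 S b hb0 hb1 hb (fun n hn => (hS n hn).2.1) (fun n hn => (hS n hn).2.2.1)
    (fun n hn => (hS n hn).2.2.2)
  set F := ⋃ m ∈ Finset.Ico n0 n1, ⋃ x ∈ S m, Metric.ball x (b m / ((M : ℝ) ^ m) ^ 2) with hF
  set B := {α : ℝ | ∀ q, N ≤ q → 1 ≤ q → ¬ distNearestInt (q * α - σ) < A.indicator ψ q} with hB
  have hFm : MeasurableSet F :=
    Finset.measurableSet_biUnion _ fun _ _ =>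
      Finset.measurableSet_biUnion _ fun _ _ => Metric.isOpen_ball.measurableSet
  have hFsub : ∀ α ∈ F, α ∈ Metric.closedBall x r ∧ α ∉ B := by
    intro α hα
    simp only [hF, Set.mem_iUnion] at hα
    obtain ⟨n, hn, y, hy, hα⟩ := hα
    rw [Finset.mem_Ico] at hn
    obtain ⟨h1, h2⟩ := hn0 n hn.1
    obtain ⟨g1, g2, q, hq, p, hp⟩ := (hS n hn.1).1 y hy
    rw [Metric.mem_ball, Real.dist_eq] at hα
    have hXpos : (0 : ℝ) < (M : ℝ) ^ n := by positivity
    have hX1 : (1 : ℝ) ≤ (M : ℝ) ^ n := one_le_pow₀ (by linarith)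
    have hXm : (m : ℝ) ≤ (M : ℝ) ^ n := by
      have : m ≤ M ^ n := le_trans (le_trans (le_max_right _ _) (le_max_right _ _)) h1
      exact_mod_cast this
    constructor
    · rw [Metric.mem_closedBall, Real.dist_eq]
      have h3 : b n / ((M : ℝ) ^ n) ^ 2 ≤ r / 2 := by
        rw [div_le_iff₀ (by positivity)]
        have h4 : 1 ≤ (M : ℝ) ^ n * r := by
          rw [← div_le_iff₀ hr]; linarith
        have := hb1 n
        nlinarith
      have := abs_lt.1 hα
      rw [abs_le]
      constructor <;> linarith
    · intro hαB
      obtain ⟨q1, q2, q3⟩ := hQ n q hq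
      have hqN : N ≤ q := le_trans (le_trans (le_trans (le_max_left _ _) (le_max_right _ _)) h1) q2
      have hpow : 1 ≤ M ^ n := Nat.one_le_pow _ _ (by omega)
      have hHX : 16 * M ^ (n - 1) ≤ M ^ n := by
        obtain ⟨j, rfl⟩ : ∃ j, n = j + 1 := ⟨n - 1, by omega⟩
        rw [Nat.add_sub_cancel, pow_succ, mul_comm]
        exact Nat.mul_le_mul_left _ (by omega)
      have hq1 : 1 ≤ q := by omega
      have hqM : q ≤ M ^ (n + 1) := by
        rw [pow_succ]
        nlinarith
      apply hαB q hqN hq1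
      rw [Set.indicator_of_mem q1]
      have hqpos : (0 : ℝ) < q := by exact_mod_cast hq1
      have hq2X : (q : ℝ) ≤ 2 * (M : ℝ) ^ n := by
        have : q ≤ 2 * M ^ n := by omega
        exact_mod_cast this
      calc distNearestInt (q * α - σ) ≤ |(q * α - σ) - p| := round_le _ _
        _ = |(q : ℝ) * (α - y)| := by
            congr 1
            rw [hp]; field_simp; ring
        _ = q * |α - y| := by rw [abs_mul, abs_of_pos hqpos]
        _ < q * (b n / ((M : ℝ) ^ n) ^ 2) := by gcongr
        _ ≤ 2 * (M : ℝ) ^ n * (b n / ((M : ℝ) ^ n) ^ 2) := by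
            have := hb0 n
            gcongr
        _ = 2 * b n / (M : ℝ) ^ n := by field_simp
        _ ≤ ψ (M ^ (n + 1)) := by
            rw [div_le_iff₀ hXpos]
            have := hbψ n
            linarith
        _ ≤ ψ q := hψdec _ _ hq1 hqM
  have hdisj : Disjoint (B ∩ Metric.closedBall x r) F := by
    rw [Set.disjoint_left]
    intro α h1 h2
    exact (hFsub α h2).2 h1.1
  have hle : volume (B ∩ Metric.closedBall x r) + volume F ≤ ENNReal.ofReal (2 * r) := by
    rw [← measure_union hdisj hFm, ← Real.volume_closedBall]
    apply measure_mono
    apply Set.union_subset Set.inter_subset_right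
    exact fun α hα => (hFsub α hα).1
  have h5 : (2 - c / 64) * r = 2 * r - c / 64 * r := by ring
  rw [h5, ENNReal.ofReal_sub _ (by positivity)]
  apply ENNReal.le_sub_of_add_le_right ENNReal.ofReal_ne_top
  exact (add_le_add le_rfl hn1).trans hle

theorem stmt2 (ℓ : ℕ) (π : Fin ℓ → Set ℕ) (σ : Fin ℓ → ℝ)
    (hpart : ∀ q : ℕ, 1 ≤ q → ∃! k, q ∈ π k)
    (ψ : ℕ → ℝ) (hψ0 : ∀ q, 0 ≤ ψ q)
    (hψdec : ∀ q r : ℕ, 1 ≤ q → q ≤ r → ψ r ≤ ψ q)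
    (hdiv : ¬ Summable ψ) :
    ∃ k : Fin ℓ, volume (WSet ((π k).indicator ψ) (fun _ => σ k)) = 1 := by
  classical
  obtain ⟨k0, -, -⟩ := hpart 1 le_rfl
  have hℓ : 1 ≤ ℓ := by have := k0.2; omega
  set M := 64 * ℓ with hMdef
  set Q : Fin ℓ → ℕ → Finset ℕ := fun k n =>
    (Finset.Ico (M ^ n) (M ^ n + 16 * M ^ (n - 1))).filter (fun q => q ∈ π k) with hQ
  have hpig : ∀ n, ∃ k, 16 * M ^ (n - 1) ≤ ℓ * (Q k n).card := by
    intro n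
    by_contra! hall
    have h1 : 16 * M ^ (n - 1) ≤ ∑ k, (Q k n).card := by
      calc 16 * M ^ (n - 1) = (Finset.Ico (M ^ n) (M ^ n + 16 * M ^ (n - 1))).card := by simp
        _ ≤ (Finset.univ.biUnion fun k => Q k n).card := by
          apply Finset.card_le_card
          intro q hq
          have hq' := Finset.mem_Ico.1 hq
          have : 1 ≤ M ^ n := Nat.one_le_pow _ _ (by omega)
          obtain ⟨k, hk, -⟩ := hpart q (by omega)
          rw [Finset.mem_biUnion]
          exact ⟨k, Finset.mem_univ _, Finset.mem_filter.2 ⟨hq, hk⟩⟩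
        _ ≤ _ := Finset.card_biUnion_le
    have h2 : ∑ k : Fin ℓ, ℓ * (Q k n).card < ∑ k : Fin ℓ, 16 * M ^ (n - 1) :=
      Finset.sum_lt_sum_of_nonempty ⟨k0, Finset.mem_univ _⟩ fun k _ => hall k
    rw [← Finset.mul_sum, Finset.sum_const, Finset.card_univ, Fintype.card_fin, smul_eq_mul] at h2
    have := Nat.mul_le_mul_left ℓ h1
    omega
  choose kk hkk using hpig
  set a : ℕ → ℝ := fun n => (M : ℝ) ^ n * ψ (M ^ (n + 1)) / 2 with ha
  have ha0 : ∀ n, 0 ≤ a n := fun n => by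
    have := hψ0 (M ^ (n + 1))
    simp only [ha]; positivity
  have hadiv : ¬ Summable a := not_summable_condensed M (by omega) ψ hψ0 hψdec hdiv
  have hmin : ¬ Summable (fun n => min (a n) (1 / 16)) := by
    intro h
    apply hadiv
    have h1 := h.tendsto_atTop_zero.eventually (gt_mem_nhds (by norm_num : (0 : ℝ) < 1 / 16))
    refine Summable.of_norm_bounded_eventually_nat h ?_
    filter_upwards [h1] with n hn
    rw [Real.norm_of_nonneg (ha0 n)]
    rcases min_lt_iff.1 hn with h2 | h2
    · rw [min_eq_left h2.le]
    · exact absurd h2 (lt_irrefl _)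
  set b : Fin ℓ → ℕ → ℝ := fun k n => if kk n = k then min (a n) (1 / 16) else 0 with hb
  have hexk : ∃ k, ¬ Summable (b k) := by
    by_contra! hall
    apply hmin
    have := summable_sum (s := Finset.univ) (fun k _ => hall k)
    refine this.congr ?_
    intro n
    simp [hb]
  obtain ⟨k, hk⟩ := hexk
  refine ⟨k, ?_⟩
  have hnull := local_bound ℓ hℓ (π k) (σ k) ψ hψ0 hψdec (Q k) (b k)
    (by
      intro n q hq
      have := Finset.mem_filter.1 hq
      exact ⟨this.2, Finset.mem_Ico.1 this.1⟩)
    (by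
      intro n
      simp only [hb]
      split_ifs
      · exact le_min (ha0 n) (by norm_num)
      · exact le_rfl)
    (by
      intro n
      simp only [hb]
      split_ifs
      · exact min_le_right _ _
      · norm_num)
    (by
      intro n
      simp only [hb]
      split_ifs
      · exact min_le_left _ _
      · exact ha0 n)
    (by
      intro n hn
      simp only [hb] at hn
      split_ifs at hn with h
      · have := hkk n
        rw [h] at this
        exact_mod_cast this
      · exact absurd rfl hn)
    hk
  have hunion := measure_iUnion_null hnull
  have hsub : Set.Icc (0 : ℝ) 1 ⊆ WSet ((π k).indicator ψ) (fun _ => σ k) ∪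
      ⋃ N : ℕ, {α : ℝ | ∀ q, N ≤ q → 1 ≤ q → ¬ distNearestInt (q * α - σ k) < (π k).indicator ψ q} := by
    intro α hα
    by_cases h : α ∈ ⋃ N : ℕ, {α : ℝ | ∀ q, N ≤ q → 1 ≤ q → ¬ distNearestInt (q * α - σ k) < (π k).indicator ψ q}
    · exact Or.inr h
    · left
      simp only [Set.mem_iUnion, Set.mem_setOf_eq, not_exists] at h
      push Not at h
      refine ⟨hα, ?_⟩
      apply Set.infinite_of_forall_exists_gt
      intro N
      obtain ⟨q, h1, h2, h3⟩ := h (N + 1)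
      exact ⟨q, ⟨h2, h3⟩, by omega⟩
  apply le_antisymm
  · calc volume (WSet ((π k).indicator ψ) (fun _ => σ k)) ≤ volume (Set.Icc (0 : ℝ) 1) :=
          measure_mono fun α hα => hα.1
      _ = 1 := by simp
  · calc (1 : ENNReal) = volume (Set.Icc (0 : ℝ) 1) := by simp
      _ ≤ _ := measure_mono hsub
      _ ≤ _ := measure_union_le _ _
      _ = _ := by rw [hunion, add_zero]
end
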